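/- Let 𝒮₀ be a nonempty decreasing subset of 𝒮 with 𝒮₀≠𝒮. Then E_{v₁}[exp(α·T_{𝒮₀})] < ∞ for every real α < α_c(δ), and E_{v₁}[exp(α·T_{𝒮₀})] = ∞ for every α ≥ α_c(δ). -/

import Mathlib

open scoped BigOperators Classical ENNReal
open Filter Topology

noncomputable section
namespace ORRW

/-- Probability measures on a finite type `A`, topologized as a subset of `ℝ^A`. -/
abbrev ProbMeas (A : Type) [Fintype A] : Type :=
  {p : A → ℝ // (∀ a, 0 ≤ p a) ∧ ∑ a, p a = 1}

/-- Relative entropy `R(γ‖ρ)` between two finitely supported "rows", valued in `EReal`,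
with `+∞` when absolute continuity fails. -/
def relEnt {A : Type} [Fintype A] (γ ρ : A → ℝ) : EReal :=
  if ∀ a, ρ a = 0 → γ a = 0 then ((∑ a, γ a * Real.log (γ a / ρ a) : ℝ) : EReal)
  else (⊤ : EReal)

/-- `∫ R(q‖p) dν = Σ_a ν(a) · R(q(a,·)‖p(a,·))`. -/
def relEntInt {A : Type} [Fintype A] (ν : A → ℝ) (q p : A → A → ℝ) : EReal :=
  ∑ a, (ν a : EReal) * relEnt (q a) (p a)

/-- `ν` is an invariant measure of the kernel `q`. -/
def Invariant {A : Type} [Fintype A] (ν : A → ℝ) (q : A → A → ℝ) : Prop :=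
  ∀ y, ∑ x, ν x * q x y = ν y

/-- Extended-real logarithm: `⊥` at nonpositive arguments. -/
def elog (x : ℝ) : EReal := if x ≤ 0 then (⊥ : EReal) else ((Real.log x : ℝ) : EReal)

/-- Empirical measure of a finite trajectory `f : Fin (n+1) → A`. -/
def empMeas {A : Type} [Fintype A] [DecidableEq A] (n : ℕ) (f : Fin (n + 1) → A) :
    ProbMeas A :=
  ⟨fun a => ((Finset.univ.filter (fun i => f i = a)).card : ℝ) / (n + 1),
    fun a => by positivity, by
      have key : ∑ a : A, ((Finset.univ.filter (fun i => f i = a)).card) = n + 1 := by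
        have h := Finset.card_eq_sum_card_fiberwise
          (s := (Finset.univ : Finset (Fin (n + 1)))) (t := (Finset.univ : Finset A))
          (f := f) (fun i _ => Finset.mem_univ (f i))
        simpa using h.symm
      have key' : ∑ a : A, (((Finset.univ.filter (fun i => f i = a)).card : ℝ)) = (n : ℝ) + 1 := by
        have h2 := congrArg (fun m : ℕ => (m : ℝ)) key
        push_cast at h2
        simpa using h2
      rw [← Finset.sum_div, key', div_self (by positivity)]⟩

section Graph

variable {V : Type} [Fintype V] [DecidableEq V]

/-- Weight of an edge given the set `F` of already traversed edges. -/
def gw (δ : ℝ) (F : Finset (Sym2 V)) (e : Sym2 V) : ℝ := if e ∈ F then δ else 1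

/-- The transition kernel `p̂_F` on `V`. -/
def phat (G : SimpleGraph V) [DecidableRel G.Adj] (δ : ℝ) (F : Finset (Sym2 V))
    (x y : V) : ℝ :=
  if G.Adj x y then gw δ F s(x, y) / ∑ z ∈ G.neighborFinset x, gw δ F s(x, z) else 0

/-- Two edges are adjacent iff they share a vertex. -/
def edgeAdj (e e' : Sym2 V) : Prop := ∃ v, v ∈ e ∧ v ∈ e'

/-- `x` is a vertex of the edge set `F`. -/
def memVerts (F : Finset (Sym2 V)) (x : V) : Prop := ∃ e ∈ F, x ∈ e

/-- `𝒯_G`: stochastic matrices on `V` adapted to `G`. -/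
def TG (G : SimpleGraph V) : Set (V → V → ℝ) :=
  {q | (∀ x y, 0 ≤ q x y) ∧ (∀ x, ∑ y, q x y = 1) ∧ ∀ x y, q x y ≠ 0 → G.Adj x y}

/-- `𝒯(F)`: stochastic kernels from the vertex set of `F` to `V`, supported on `F`. -/
def TE (F : Finset (Sym2 V)) : Set (V → V → ℝ) :=
  {q | (∀ x y, 0 ≤ q x y) ∧ (∀ x, memVerts F x → ∑ y, q x y = 1) ∧
    ∀ x y, q x y ≠ 0 → s(x, y) ∈ F}

/-- `ℰ`: admissible increasing sequences of traversed edge sets. -/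
def seqE (G : SimpleGraph V) [DecidableRel G.Adj] (v₁ : V) :
    Set (Fin G.edgeFinset.card → Finset (Sym2 V)) :=
  {Es | (∀ k, Es k ⊆ G.edgeFinset) ∧ (∀ k, (Es k).card = (k : ℕ) + 1) ∧
    (∀ k l : Fin G.edgeFinset.card, (k : ℕ) + 1 = (l : ℕ) → Es k ⊂ Es l) ∧
    (∀ k : Fin G.edgeFinset.card, (k : ℕ) = 0 → ∃ e ∈ Es k, v₁ ∈ e) ∧
    (∀ k l : Fin G.edgeFinset.card, (k : ℕ) + 1 = (l : ℕ) →
      ∀ e ∈ Es l \ Es k, ∃ e' ∈ Es k, edgeAdj e e')}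

/-- The rate function `I_δ`. -/
def Ifun (G : SimpleGraph V) [DecidableRel G.Adj] (v₁ : V) (δ : ℝ) (ν : ProbMeas V) : EReal :=
  sInf { c : EReal |
    ∃ (νs : Fin G.edgeFinset.card → ProbMeas V) (r : Fin G.edgeFinset.card → ℝ)
      (Es : Fin G.edgeFinset.card → Finset (Sym2 V))
      (qs : Fin G.edgeFinset.card → V → V → ℝ),
      Es ∈ seqE G v₁ ∧ (∀ k, 0 ≤ r k) ∧ (∑ k, r k = 1) ∧
      (∀ k x, (νs k).1 x ≠ 0 → memVerts (Es k) x) ∧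
      (∀ x, ∑ k, r k * (νs k).1 x = ν.1 x) ∧
      (∀ k, qs k ∈ TE (Es k)) ∧ (∀ k, Invariant (νs k).1 (qs k)) ∧
      c = ∑ k, ((r k : ℝ) : EReal) * relEntInt (νs k).1 (qs k) (phat G δ (Es k)) }

/-- Edges traversed along a path, given as a list of consecutively visited vertices. -/
def pathEdges : List V → Finset (Sym2 V)
  | [] => ∅
  | [_] => ∅
  | x :: y :: t => insert s(x, y) (pathEdges (y :: t))

/-- Product of one-step ORRW transition probabilities along a trajectory,
the trajectory being listed in reverse chronological order. -/
def stepsProb (G : SimpleGraph V) [DecidableRel G.Adj] (δ : ℝ) : List V → ℝ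
  | [] => 1
  | [_] => 1
  | y :: x :: t => phat G δ (pathEdges (x :: t).reverse) x y * stepsProb G δ (x :: t)

/-- The law of `(X_0, …, X_n)` for the `δ`-ORRW started at `v₁`. -/
def trajProb (G : SimpleGraph V) [DecidableRel G.Adj] (δ : ℝ) (v₁ : V) (n : ℕ)
    (f : Fin (n + 1) → V) : ℝ :=
  if f 0 = v₁ then stepsProb G δ (List.ofFn f).reverse else 0

/-- `P_{v₁}(L_{n+1} ∈ C)`: the probability that the empirical measure of the first
`n+1` positions of the `δ`-ORRW lies in `C`. -/
def probEmp (G : SimpleGraph V) [DecidableRel G.Adj] (δ : ℝ) (v₁ : V) (n : ℕ)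
    (C : Set (ProbMeas V)) : ℝ :=
  ∑ f : Fin (n + 1) → V, if empMeas n f ∈ C then trajProb G δ v₁ n f else 0

/-- The family `𝒮` of edge sets of connected subgraphs having an edge at `v₁`. -/
def scrS (G : SimpleGraph V) [DecidableRel G.Adj] (v₁ : V) : Set (Finset (Sym2 V)) :=
  {F | F ⊆ G.edgeFinset ∧ (∃ e ∈ F, v₁ ∈ e) ∧
    ∀ x y : V, memVerts F x → memVerts F y →
      (SimpleGraph.fromEdgeSet (↑F : Set (Sym2 V))).Reachable x y}

/-- `𝒮₀` is a decreasing subset of `𝒮`. -/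
def DecreasingIn (G : SimpleGraph V) [DecidableRel G.Adj] (v₁ : V)
    (S0 : Set (Finset (Sym2 V))) : Prop :=
  ∀ F₁ F₂, F₁ ∈ scrS G v₁ → F₂ ∈ scrS G v₁ → F₁ ⊆ F₂ → F₂ ∈ S0 → F₁ ∈ S0

/-- `P_{v₁}(T_{𝒮₀} > n)`. -/
def probTgt (G : SimpleGraph V) [DecidableRel G.Adj] (δ : ℝ) (v₁ : V)
    (S0 : Set (Finset (Sym2 V))) (n : ℕ) : ℝ :=
  ∑ f : Fin (n + 1) → V,
    if ∀ k, 1 ≤ k → k ≤ n → pathEdges ((List.ofFn f).take (k + 1)) ∈ S0 then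
      trajProb G δ v₁ n f
    else 0

/-- `P_{v₁}(C_E > n)` for the edge cover time `C_E`. -/
def probCgt (G : SimpleGraph V) [DecidableRel G.Adj] (δ : ℝ) (v₁ : V) (n : ℕ) : ℝ :=
  ∑ f : Fin (n + 1) → V,
    if ¬ G.edgeFinset ⊆ pathEdges (List.ofFn f) then trajProb G δ v₁ n f else 0

/-- `E_{v₁}[exp (α T_{𝒮₀})]`, valued in `ℝ≥0∞`; the stopping time takes values in
`{1, 2, …} ∪ {∞}`. -/
def expT (G : SimpleGraph V) [DecidableRel G.Adj] (δ : ℝ) (v₁ : V)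
    (S0 : Set (Finset (Sym2 V))) (α : ℝ) : ℝ≥0∞ :=
  (∑' n : ℕ, ENNReal.ofReal
      (Real.exp (α * (n + 1)) * (probTgt G δ v₁ S0 n - probTgt G δ v₁ S0 (n + 1)))) +
    (if 0 < α then (⊤ : ℝ≥0∞) else if α = 0 then 1 else 0) *
      ENNReal.ofReal (⨅ n : ℕ, probTgt G δ v₁ S0 n)

/-- `E_{v₁}[exp (α C_E)]`, valued in `ℝ≥0∞`. -/
def expC (G : SimpleGraph V) [DecidableRel G.Adj] (δ : ℝ) (v₁ : V) (α : ℝ) : ℝ≥0∞ :=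
  (∑' n : ℕ, ENNReal.ofReal
      (Real.exp (α * (n + 1)) * (probCgt G δ v₁ n - probCgt G δ v₁ (n + 1)))) +
    (if 0 < α then (⊤ : ℝ≥0∞) else if α = 0 then 1 else 0) *
      ENNReal.ofReal (⨅ n : ℕ, probCgt G δ v₁ n)

/-- The critical exponent `α_c(δ)` attached to a family `𝒮₀` of edge sets. -/
def alphaC (G : SimpleGraph V) [DecidableRel G.Adj] (δ : ℝ)
    (S0 : Set (Finset (Sym2 V))) : EReal :=
  sInf { c : EReal | ∃ (ν : ProbMeas V) (F : Finset (Sym2 V)) (q : V → V → ℝ),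
    F ∈ S0 ∧ q ∈ TE F ∧ (∀ x, ν.1 x ≠ 0 → memVerts F x) ∧ Invariant ν.1 q ∧
    c = relEntInt ν.1 q (phat G δ F) }

/-- `α_c^1(δ)`: the critical exponent for the cover time. -/
def alphaC1 (G : SimpleGraph V) [DecidableRel G.Adj] (v₁ : V) (δ : ℝ) : EReal :=
  alphaC G δ (scrS G v₁ \ {G.edgeFinset})

end Graph

section Lifted

variable {V : Type} [Fintype V] [LinearOrder V]

/-- Smaller endpoint of an unordered pair. -/
def sym2lo (e : Sym2 V) : V := Sym2.lift ⟨fun a b => min a b, fun a b => min_comm a b⟩ e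

/-- Larger endpoint of an unordered pair. -/
def sym2hi (e : Sym2 V) : V := Sym2.lift ⟨fun a b => max a b, fun a b => max_comm a b⟩ e

/-- `V_S = E × {-1, 1}`: vertex set of the lifted directed graph `S`
(`true` plays the role of `+1`). -/
abbrev VSet (G : SimpleGraph V) [DecidableRel G.Adj] : Type :=
  {e : Sym2 V // e ∈ G.edgeFinset} × Bool

/-- Tail `z⁻` of an oriented edge. -/
def zm (G : SimpleGraph V) [DecidableRel G.Adj] (z : VSet G) : V :=
  if z.2 then sym2lo z.1.1 else sym2hi z.1.1

/-- Head `z⁺` of an oriented edge. -/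
def zp (G : SimpleGraph V) [DecidableRel G.Adj] (z : VSet G) : V :=
  if z.2 then sym2hi z.1.1 else sym2lo z.1.1

/-- The kernel `p_F` on the lifted directed graph `S`. -/
def pS (G : SimpleGraph V) [DecidableRel G.Adj] (δ : ℝ) (F : Finset (Sym2 V))
    (z₁ z₂ : VSet G) : ℝ :=
  if zp G z₁ = zm G z₂ then
    gw δ F z₂.1.1 / ∑ w : VSet G, (if zp G z₁ = zm G w then gw δ F w.1.1 else 0)
  else 0

/-- `𝒯_S`: stochastic matrices on `V_S` moving along orientations. -/
def TS (G : SimpleGraph V) [DecidableRel G.Adj] : Set (VSet G → VSet G → ℝ) :=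
  {q | (∀ z w, 0 ≤ q z w) ∧ (∀ z, ∑ w, q z w = 1) ∧ ∀ z w, q z w ≠ 0 → zp G z = zm G w}

/-- `𝒞(𝒮₀)`: probability measures on `V_S` whose first marginal is supported in
some member of `𝒮₀`. -/
def CC (G : SimpleGraph V) [DecidableRel G.Adj] (S0 : Set (Finset (Sym2 V))) :
    Set (ProbMeas (VSet G)) :=
  {μ | ∃ F ∈ S0, ∀ z : VSet G, μ.1 z ≠ 0 → z.1.1 ∈ F}

/-- `Λ_{δ,𝒮₀}`. -/
def Lam (G : SimpleGraph V) [DecidableRel G.Adj] (v₁ : V) (δ : ℝ)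
    (S0 : Set (Finset (Sym2 V))) (μ : ProbMeas (VSet G)) : EReal :=
  sInf { c : EReal |
    ∃ (μs : Fin G.edgeFinset.card → ProbMeas (VSet G)) (r : Fin G.edgeFinset.card → ℝ)
      (Es : Fin G.edgeFinset.card → Finset (Sym2 V))
      (qs : Fin G.edgeFinset.card → VSet G → VSet G → ℝ),
      Es ∈ seqE G v₁ ∧ (∀ k, 0 ≤ r k) ∧ (∀ k, Es k ∉ S0 → r k = 0) ∧ (∑ k, r k = 1) ∧
      (∀ k z, (μs k).1 z ≠ 0 → z.1.1 ∈ Es k) ∧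
      (∀ z, ∑ k, r k * (μs k).1 z = μ.1 z) ∧
      (∀ k, qs k ∈ TS G) ∧ (∀ k, Invariant (μs k).1 (qs k)) ∧
      c = ∑ k, ((r k : ℝ) : EReal) * relEntInt (μs k).1 (qs k) (pS G δ (Es k)) }

/-- `Λ^z_{δ,𝒮₀}`. -/
def LamZ (G : SimpleGraph V) [DecidableRel G.Adj] (v₁ : V) (δ : ℝ)
    (S0 : Set (Finset (Sym2 V))) (z : VSet G) (μ : ProbMeas (VSet G)) : EReal :=
  sInf { c : EReal |
    ∃ (μs : Fin G.edgeFinset.card → ProbMeas (VSet G)) (r : Fin G.edgeFinset.card → ℝ)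
      (Es : Fin G.edgeFinset.card → Finset (Sym2 V))
      (qs : Fin G.edgeFinset.card → VSet G → VSet G → ℝ),
      Es ∈ seqE G v₁ ∧ (∀ k : Fin G.edgeFinset.card, (k : ℕ) = 0 → Es k = {z.1.1}) ∧
      (∀ k, 0 ≤ r k) ∧ (∀ k, Es k ∉ S0 → r k = 0) ∧ (∑ k, r k = 1) ∧
      (∀ k w, (μs k).1 w ≠ 0 → w.1.1 ∈ Es k) ∧
      (∀ w, ∑ k, r k * (μs k).1 w = μ.1 w) ∧
      (∀ k, qs k ∈ TS G) ∧ (∀ k, Invariant (μs k).1 (qs k)) ∧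
      c = ∑ k, ((r k : ℝ) : EReal) * relEntInt (μs k).1 (qs k) (pS G δ (Es k)) }

/-- `Λ₁`: the Donsker–Varadhan functional for the simple random walk on `S`
(whose kernel is `pS` with `δ = 1`). -/
def Lam1 (G : SimpleGraph V) [DecidableRel G.Adj] (μ : ProbMeas (VSet G)) : EReal :=
  sInf { c : EReal | ∃ q ∈ TS G, Invariant μ.1 q ∧ c = relEntInt μ.1 q (pS G 1 ∅) }

/-- Boundary `∂F` of an edge set: edges of `F` adjacent to some edge outside `F`. -/
def bdry (G : SimpleGraph V) [DecidableRel G.Adj] (F : Finset (Sym2 V)) : Finset (Sym2 V) :=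
  F.filter fun e => ∃ e' ∈ G.edgeFinset \ F, edgeAdj e e'

/-- Out-degree `d(z)` of `z` in `S`. -/
def outDeg (G : SimpleGraph V) [DecidableRel G.Adj] (z : VSet G) : ℕ :=
  (Finset.univ.filter (fun w : VSet G => zp G z = zm G w)).card

/-- Number `k(z)` of out-neighbours of `z` lying in `F × {-1, 1}`. -/
def outDegIn (G : SimpleGraph V) [DecidableRel G.Adj] (F : Finset (Sym2 V))
    (z : VSet G) : ℕ :=
  (Finset.univ.filter (fun w : VSet G => zp G z = zm G w ∧ w.1.1 ∈ F)).card

/-- The law of `(Z_0, …, Z_n)` for the lifted `δ`-ORRW conditioned on `Z_0 = z`. -/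
def liftTraj (G : SimpleGraph V) [DecidableRel G.Adj] (δ : ℝ) (z : VSet G) (n : ℕ)
    (g : Fin (n + 1) → VSet G) : ℝ :=
  if g 0 = z then
    ∏ i : Fin n,
      pS G δ ((Finset.Iic i.castSucc).image (fun j => (g j).1.1))
        (g i.castSucc) (g i.succ)
  else 0

/-- The restricted logarithmic Laplace functional `W^{n+1}_{𝒮₀}(z)`. -/
def Wres (G : SimpleGraph V) [DecidableRel G.Adj] (δ : ℝ) (z : VSet G)
    (S0 : Set (Finset (Sym2 V))) (h : ProbMeas (VSet G) → ℝ) (n : ℕ) : EReal :=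
  if 0 < ∑ g : Fin (n + 1) → VSet G,
      (if empMeas n g ∈ CC G S0 then liftTraj G δ z n g else 0) then
    ((-((((n : ℝ) + 1))⁻¹ * Real.log (∑ g : Fin (n + 1) → VSet G,
      if empMeas n g ∈ CC G S0 then
        Real.exp (-((n : ℝ) + 1) * h (empMeas n g)) * liftTraj G δ z n g
      else 0)) : ℝ) : EReal)
  else (⊤ : EReal)

end Lifted

/-!
Once the walk has traversed the edge set `F`, it moves inside `F` according to a substochastic
kernel, obtained by killing `p̂_F` when it leaves `F`. This kernel is reversible and irreducible,
so it has a Perron eigenvalue `l F`. Gibbs' variational inequality tested on the Perron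
eigenfunction shows that every competitor in the definition of `α_c` costs at least `-log (l F)`;
the Doob transform, whose invariant measure is explicit by reversibility, attains this value.
Hence `α_c` is the minimum of `-log (l F)` over `F ∈ 𝒮₀`.

The probability `ℙ(T > n)` decays at the matching rate. If `L` exceeds every `l F`, the Perron
eigenfunctions weighted by `κ ^ |F|` with small `κ` form a function which the killed chain of pairs
(edge set, position) contracts by the factor `L`, so `ℙ(T > n) ≤ C L ^ n`. Conversely the walk
reaches every `F ∈ 𝒮₀` with positive probability, so `ℙ(T > n) ≥ c (l F) ^ n`; since
`𝒮₀ ≠ 𝒮` forces `l F < 1`, this makes the exponential moment infinite at the critical exponent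
and beyond it.
-/

section RelativeEntropy

variable {A : Type} [Fintype A]

theorem ereal_coe_sum {ι : Type*} (s : Finset ι) (f : ι → ℝ) :
    ((∑ i ∈ s, f i : ℝ) : EReal) = ∑ i ∈ s, (f i : EReal) :=
  map_sum (⟨⟨Real.toEReal, EReal.coe_zero⟩, EReal.coe_add⟩ : ℝ →+ EReal) f s

theorem mul_log_sub_log_sub_log_div_le {γ ρ h Z : ℝ} (hγ : 0 ≤ γ) (hρ : 0 ≤ ρ) (hh : 0 ≤ h)
    (hZ : 0 < Z) (hpos : γ ≠ 0 → 0 < ρ ∧ 0 < h) :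
    γ * (Real.log h - Real.log Z - Real.log (γ / ρ)) ≤ ρ * h / Z - γ := by
  rcases hγ.eq_or_lt with rfl | hγ
  · simpa using div_nonneg (mul_nonneg hρ hh) hZ.le
  obtain ⟨hρ, hh⟩ := hpos hγ.ne'
  calc γ * (Real.log h - Real.log Z - Real.log (γ / ρ))
      = γ * Real.log (ρ * h / Z / γ) := by
        rw [Real.log_div hγ.ne' hρ.ne', Real.log_div (by positivity) hγ.ne',
          Real.log_div (by positivity) hZ.ne', Real.log_mul hρ.ne' hh.ne']
        ring
    _ ≤ γ * (ρ * h / Z / γ - 1) :=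
        mul_le_mul_of_nonneg_left (Real.log_le_sub_one_of_pos (by positivity)) hγ.le
    _ = ρ * h / Z - γ := by field_simp

theorem sum_mul_log_sub_log_sum_le_relEnt {γ ρ h : A → ℝ} (hγ : ∀ a, 0 ≤ γ a)
    (hγ_sum : ∑ a, γ a = 1) (hρ : ∀ a, 0 ≤ ρ a) (hh : ∀ a, 0 ≤ h a)
    (hpos : ∀ a, γ a ≠ 0 → 0 < h a) :
    ((∑ a, γ a * Real.log (h a) - Real.log (∑ a, ρ a * h a) : ℝ) : EReal) ≤ relEnt γ ρ := by
  unfold relEnt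
  split_ifs with hac
  swap
  · exact le_top
  have hρ_pos : ∀ a, γ a ≠ 0 → 0 < ρ a := fun a ha => (hρ a).lt_of_ne' (mt (hac a) ha)
  obtain ⟨b, -, hb⟩ : ∃ b ∈ Finset.univ, γ b ≠ 0 :=
    Finset.exists_ne_zero_of_sum_ne_zero (by simp [hγ_sum])
  have hZ : 0 < ∑ a, ρ a * h a :=
    Finset.sum_pos' (fun a _ => mul_nonneg (hρ a) (hh a))
      ⟨b, Finset.mem_univ b, mul_pos (hρ_pos b hb) (hpos b hb)⟩
  have hsum := Finset.sum_le_sum fun a (_ : a ∈ Finset.univ) =>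
    mul_log_sub_log_sub_log_div_le (hγ a) (hρ a) (hh a) hZ fun ha => ⟨hρ_pos a ha, hpos a ha⟩
  simp only [mul_sub, Finset.sum_sub_distrib, ← Finset.sum_mul, ← Finset.sum_div, hγ_sum,
    div_self hZ.ne', one_mul] at hsum
  exact_mod_cast (by linarith)

theorem relEnt_tilt {ρ h : A → ℝ} (hZ : ∑ a, ρ a * h a ≠ 0) :
    relEnt (fun a => ρ a * h a / ∑ b, ρ b * h b) ρ =
      ((∑ a, ρ a * h a / (∑ b, ρ b * h b) * Real.log (h a) - Real.log (∑ a, ρ a * h a) : ℝ) :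
        EReal) := by
  set Z := ∑ a, ρ a * h a with hZ_def
  have hterm : ∀ a, ρ a * h a / Z * Real.log (ρ a * h a / Z / ρ a) =
      ρ a * h a / Z * Real.log (h a) - ρ a * h a / Z * Real.log Z := by
    intro a
    rcases eq_or_ne (ρ a * h a) 0 with h0 | h0
    · simp [h0]
    · obtain ⟨hρ, hh⟩ := mul_ne_zero_iff.1 h0
      rw [show ρ a * h a / Z / ρ a = h a / Z by field_simp, Real.log_div hh hZ, mul_sub]
  rw [relEnt, if_pos fun a ha => by simp [ha]]
  simp only [hterm, Finset.sum_sub_distrib, ← Finset.sum_mul, ← Finset.sum_div, ← hZ_def,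
    div_self hZ, one_mul]

theorem coe_sum_le_relEntInt {ν c : A → ℝ} {q p : A → A → ℝ} (hν : ∀ x, 0 ≤ ν x)
    (hc : ∀ x, ν x ≠ 0 → (c x : EReal) ≤ relEnt (q x) (p x)) :
    ((∑ x, ν x * c x : ℝ) : EReal) ≤ relEntInt ν q p := by
  rw [ereal_coe_sum]
  refine Finset.sum_le_sum fun x _ => ?_
  rcases eq_or_ne (ν x) 0 with h0 | h0
  · simp [h0]
  · rw [EReal.coe_mul]
    exact mul_le_mul_of_nonneg_left (hc x h0) (EReal.coe_nonneg.2 (hν x))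

theorem relEntInt_eq_coe_sum {ν c : A → ℝ} {q p : A → A → ℝ}
    (hc : ∀ x, ν x ≠ 0 → relEnt (q x) (p x) = (c x : EReal)) :
    relEntInt ν q p = ((∑ x, ν x * c x : ℝ) : EReal) := by
  rw [ereal_coe_sum]
  refine Finset.sum_congr rfl fun x _ => ?_
  rcases eq_or_ne (ν x) 0 with h0 | h0
  · simp [h0]
  · rw [hc x h0, EReal.coe_mul]

namespace Invariant

variable {ν : A → ℝ} {q : A → A → ℝ}

theorem sum_mul_sum (hinv : Invariant ν q) (f : A → ℝ) :
    ∑ x, ν x * ∑ y, q x y * f y = ∑ x, ν x * f x := by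
  simp only [Finset.mul_sum, ← mul_assoc]
  rw [Finset.sum_comm]
  simp only [← Finset.sum_mul, hinv _]

theorem ne_zero_of_ne_zero (hinv : Invariant ν q) (hν : ∀ x, 0 ≤ ν x)
    (hq : ∀ x y, 0 ≤ q x y) {x y : A} (hx : ν x ≠ 0) (hxy : q x y ≠ 0) : ν y ≠ 0 := by
  intro hy
  have hsum := hinv y
  rw [hy, Finset.sum_eq_zero_iff_of_nonneg fun x _ => mul_nonneg (hν x) (hq x y)] at hsum
  exact mul_ne_zero hx hxy (hsum x (Finset.mem_univ x))

theorem sum_mul_sum_log_sub_log (hinv : Invariant ν q) (hν_sum : ∑ x, ν x = 1) {l : ℝ}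
    (hl : l ≠ 0) {r : A → ℝ} (hr : ∀ x, ν x ≠ 0 → r x ≠ 0) :
    ∑ x, ν x * (∑ y, q x y * Real.log (r y) - Real.log (l * r x)) = -Real.log l := by
  have hlog : ∀ x, ν x * Real.log (l * r x) = ν x * Real.log l + ν x * Real.log (r x) := by
    intro x
    rcases eq_or_ne (ν x) 0 with h0 | h0
    · simp [h0]
    · rw [Real.log_mul hl (hr x h0), mul_add]
  simp only [mul_sub, hlog, Finset.sum_sub_distrib, Finset.sum_add_distrib, hinv.sum_mul_sum,
    ← Finset.sum_mul, hν_sum]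
  ring

end Invariant

end RelativeEntropy

section Perron

theorem reApplyInnerSelf_le_of_isMaxOn_sphere {E : Type*} [NormedAddCommGroup E]
    [InnerProductSpace ℝ E] {T : E →L[ℝ] E} {f : E}
    (hf : IsMaxOn T.reApplyInnerSelf (Metric.sphere 0 1) f) (g : E) :
    T.reApplyInnerSelf g ≤ T.reApplyInnerSelf f * ‖g‖ ^ 2 := by
  rcases eq_or_ne g 0 with rfl | hg
  · simp [T.reApplyInnerSelf_apply]
  have hunit : ‖g‖⁻¹ • g ∈ Metric.sphere (0 : E) 1 := by
    rw [mem_sphere_zero_iff_norm, norm_smul, norm_inv, norm_norm,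
      inv_mul_cancel₀ (norm_ne_zero_iff.2 hg)]
  have hle : T.reApplyInnerSelf (‖g‖⁻¹ • g) ≤ T.reApplyInnerSelf f := hf hunit
  rwa [T.reApplyInnerSelf_smul, norm_inv, norm_norm, inv_pow,
    inv_mul_le_iff₀ (by positivity), mul_comm] at hle

open Matrix in
theorem dotProduct_mulVec_le_abs {ι : Type*} [Fintype ι] {M : Matrix ι ι ℝ}
    (hM : ∀ i j, 0 ≤ M i j) (g : ι → ℝ) : g ⬝ᵥ M *ᵥ g ≤ |g| ⬝ᵥ M *ᵥ |g| := by
  simp only [dotProduct, mulVec, Finset.mul_sum, Pi.abs_apply]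
  refine Finset.sum_le_sum fun i _ => Finset.sum_le_sum fun j _ => ?_
  calc g i * (M i j * g j) = M i j * (g i * g j) := by ring
    _ ≤ M i j * |g i * g j| := mul_le_mul_of_nonneg_left (le_abs_self _) (hM i j)
    _ = |g i| * (M i j * |g j|) := by rw [abs_mul]; ring

open Matrix in
theorem exists_nonneg_eigenvector_of_isSymm {ι : Type*} [Fintype ι] [Nonempty ι]
    {M : Matrix ι ι ℝ} (hM : M.IsSymm) (hM0 : ∀ i j, 0 ≤ M i j) :
    ∃ (l : ℝ) (f : ι → ℝ), (∀ i, 0 ≤ f i) ∧ f ≠ 0 ∧ M *ᵥ f = l • f ∧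
      ∀ g : ι → ℝ, g ⬝ᵥ M *ᵥ g ≤ l * (g ⬝ᵥ g) := by
  let T := toEuclideanCLM (n := ι) (𝕜 := ℝ) M
  have hT : IsSelfAdjoint T := by
    have : IsSelfAdjoint M := by
      rw [IsSelfAdjoint, star_eq_conjTranspose, conjTranspose_eq_transpose_of_trivial, hM.eq]
    exact this.map _
  have hform : ∀ g, T.reApplyInnerSelf g = g.ofLp ⬝ᵥ M *ᵥ g.ofLp := fun g => by
    rw [T.reApplyInnerSelf_apply, real_inner_comm, inner_toEuclideanCLM, RCLike.re_to_real]
  obtain ⟨f₀, hf₀, hmax⟩ := (isCompact_sphere (0 : EuclideanSpace ℝ ι) 1).exists_isMaxOn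
    (NormedSpace.sphere_nonempty.2 zero_le_one) T.reApplyInnerSelf_continuous.continuousOn
  let f : EuclideanSpace ℝ ι := WithLp.toLp 2 |f₀.ofLp|
  have hf : ‖f‖ = 1 := by
    rw [← mem_sphere_zero_iff_norm.1 hf₀, EuclideanSpace.norm_eq, EuclideanSpace.norm_eq]
    simp [f]
  have hfmax : IsMaxOn T.reApplyInnerSelf (Metric.sphere 0 1) f := fun g hg =>
    (hmax hg).trans (by simpa only [hform] using dotProduct_mulVec_le_abs hM0 f₀.ofLp)
  have heig : T f = T.reApplyInnerSelf f • f := by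
    have h := hT.eq_smul_self_of_isLocalExtrOn_real (Or.inr (hf.symm ▸ hfmax.localize))
    rwa [ContinuousLinearMap.rayleighQuotient, hf, one_pow, div_one] at h
  refine ⟨T.reApplyInnerSelf f, f, fun i => abs_nonneg _, fun h0 => ?_,
    congrArg WithLp.ofLp heig, fun g => ?_⟩
  · have : f = 0 := WithLp.ofLp_injective 2 h0
    simp [this] at hf
  · have hg := reApplyInnerSelf_le_of_isMaxOn_sphere hfmax (WithLp.toLp 2 g)
    simpa only [hform, EuclideanSpace.real_norm_sq_eq, dotProduct, ← pow_two] using hg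

variable {A : Type}

/-- `K` is a nonnegative kernel which charges only pairs of points of `S`, charges at least one,
and whose positive entries connect any two points of `S`. -/
structure IsIrreducibleOn (K : A → A → ℝ) (S : Set A) : Prop where
  nonneg : ∀ x y, 0 ≤ K x y
  mem_left : ∀ {x y}, K x y ≠ 0 → x ∈ S
  mem_right : ∀ {x y}, K x y ≠ 0 → y ∈ S
  exists_ne_zero : ∃ x y, K x y ≠ 0
  reflTransGen : ∀ {x y}, x ∈ S → y ∈ S → Relation.ReflTransGen (fun a b => 0 < K a b) x y

/-- `r` is a Perron eigenfunction of `K` on `S`, extended by zero, with eigenvalue `l > 0`. -/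
structure IsPerronPair [Fintype A] (K : A → A → ℝ) (S : Set A) (l : ℝ) (r : A → ℝ) : Prop where
  eigenvalue_pos : 0 < l
  pos : ∀ {x}, x ∈ S → 0 < r x
  eq_zero : ∀ {x}, x ∉ S → r x = 0
  sum_mul : ∀ x, ∑ y, K x y * r y = l * r x

/-- The conjugate of the kernel `K` by the diagonal matrix with entries `c`. -/
def diagConj (c : A → ℝ) (K : A → A → ℝ) (x y : A) : ℝ := c x * K x y / c y

variable {K : A → A → ℝ} {S : Set A} {l : ℝ} {r c m : A → ℝ}

namespace IsIrreducibleOn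

theorem eq_zero_of_notMem_left (hK : IsIrreducibleOn K S) {x : A} (hx : x ∉ S) (y : A) :
    K x y = 0 :=
  not_not.1 fun h => hx (hK.mem_left h)

theorem eq_zero_of_notMem_right (hK : IsIrreducibleOn K S) (x : A) {y : A} (hy : y ∉ S) :
    K x y = 0 :=
  not_not.1 fun h => hy (hK.mem_right h)

theorem diagConj_pos (hK : IsIrreducibleOn K S) (hc : ∀ x ∈ S, 0 < c x) {x y : A}
    (hxy : 0 < K x y) : 0 < diagConj c K x y :=
  div_pos (mul_pos (hc x (hK.mem_left hxy.ne')) hxy) (hc y (hK.mem_right hxy.ne'))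

theorem diagConj (hK : IsIrreducibleOn K S) (hc : ∀ x ∈ S, 0 < c x) :
    IsIrreducibleOn (diagConj c K) S where
  nonneg x y := (hK.nonneg x y).eq_or_lt.elim (fun h => by simp [ORRW.diagConj, ← h])
    fun h => (hK.diagConj_pos hc h).le
  mem_left {x y} h := hK.mem_left (y := y) fun h0 => h (by simp [ORRW.diagConj, h0])
  mem_right {x y} h := hK.mem_right (x := x) fun h0 => h (by simp [ORRW.diagConj, h0])
  exists_ne_zero := by
    obtain ⟨a, b, hab⟩ := hK.exists_ne_zero
    exact ⟨a, b, (hK.diagConj_pos hc ((hK.nonneg a b).lt_of_ne' hab)).ne'⟩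
  reflTransGen hx hy :=
    Relation.ReflTransGen.mono (fun _ _ h => hK.diagConj_pos hc h) _ _ (hK.reflTransGen hx hy)

theorem diagConj_sqrt_comm (hK : IsIrreducibleOn K S) (hm : ∀ x ∈ S, 0 < m x)
    (hrev : ∀ x y, m x * K x y = m y * K y x) (x y : A) :
    ORRW.diagConj (fun x => √(m x)) K x y = ORRW.diagConj (fun x => √(m x)) K y x := by
  unfold ORRW.diagConj
  by_cases hx : x ∈ S
  swap
  · simp [hK.eq_zero_of_notMem_left hx, hK.eq_zero_of_notMem_right _ hx]
  by_cases hy : y ∈ S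
  swap
  · simp [hK.eq_zero_of_notMem_left hy, hK.eq_zero_of_notMem_right _ hy]
  have h := hrev x y
  rw [← Real.mul_self_sqrt (hm x hx).le, ← Real.mul_self_sqrt (hm y hy).le] at h
  rw [div_eq_div_iff (Real.sqrt_pos.2 (hm y hy)).ne' (Real.sqrt_pos.2 (hm x hx)).ne']
  linarith

variable [Fintype A]

theorem isPerronPair_of_nonneg (hK : IsIrreducibleOn K S) (hl : 0 < l) (hr : ∀ x, 0 ≤ r x)
    (hr0 : r ≠ 0) (heig : ∀ x, ∑ y, K x y * r y = l * r x) : IsPerronPair K S l r := by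
  have hoff : ∀ x, x ∉ S → r x = 0 := fun x hx => by
    simpa [hK.eq_zero_of_notMem_left hx, hl.ne'] using heig x
  have hstep : ∀ x y, 0 < K x y → r x = 0 → r y = 0 := by
    intro x y hxy hx
    have hsum := heig x
    rw [hx, mul_zero, Finset.sum_eq_zero_iff_of_nonneg
      fun y _ => mul_nonneg (hK.nonneg x y) (hr y)] at hsum
    exact (mul_eq_zero.1 (hsum y (Finset.mem_univ y))).resolve_left hxy.ne'
  refine ⟨hl, fun {x} hx => (hr x).lt_of_ne' fun hx0 => hr0 (funext fun y => ?_), hoff _, heig⟩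
  by_cases hy : y ∈ S
  · exact (hK.reflTransGen hx hy).head_induction_on
      (motive := fun a _ => r a = 0 → r y = 0) id (fun hab _ ih ha => ih (hstep _ _ hab ha)) hx0
  · exact hoff y hy

theorem exists_isPerronPair_of_symm (hK : IsIrreducibleOn K S) (hsymm : ∀ x y, K x y = K y x) :
    ∃ l r, IsPerronPair K S l r := by
  obtain ⟨a, b, hab⟩ := hK.exists_ne_zero
  have : Nonempty A := ⟨a⟩
  obtain ⟨l, f, hf, hf0, heig, hmax⟩ := exists_nonneg_eigenvector_of_isSymm
    (M := Matrix.of K) (Matrix.IsSymm.ext fun x y => hsymm y x) hK.nonneg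
  have hsum_pos : 0 < ∑ x, ∑ y, K x y :=
    Finset.sum_pos' (fun x _ => Finset.sum_nonneg fun y _ => hK.nonneg x y)
      ⟨a, Finset.mem_univ a, Finset.sum_pos' (fun y _ => hK.nonneg a y)
        ⟨b, Finset.mem_univ b, (hK.nonneg a b).lt_of_ne' hab⟩⟩
  have hl : 0 < l := by
    have hone : ∑ x, ∑ y, K x y ≤ l * Fintype.card A := by
      simpa [dotProduct, Matrix.mulVec] using hmax 1
    exact pos_of_mul_pos_left (hsum_pos.trans_le hone) (Nat.cast_nonneg _)
  exact ⟨l, f, hK.isPerronPair_of_nonneg hl hf hf0 fun x => congrFun heig x⟩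

theorem isPerronPair_of_diagConj (hK : IsIrreducibleOn K S) (hc : ∀ x ∈ S, 0 < c x)
    (h : IsPerronPair (ORRW.diagConj c K) S l r) : IsPerronPair K S l fun x => r x / c x where
  eigenvalue_pos := h.eigenvalue_pos
  pos hx := div_pos (h.pos hx) (hc _ hx)
  eq_zero hx := by simp [h.eq_zero hx]
  sum_mul x := by
    by_cases hx : x ∈ S
    · have hcx := hc x hx
      rw [← mul_div_assoc, ← h.sum_mul x, Finset.sum_div]
      refine Finset.sum_congr rfl fun y _ => ?_
      simp only [ORRW.diagConj]
      field_simp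
    · simp [hK.eq_zero_of_notMem_left hx, h.eq_zero hx]

theorem exists_isPerronPair (hK : IsIrreducibleOn K S) (hm : ∀ x ∈ S, 0 < m x)
    (hrev : ∀ x y, m x * K x y = m y * K y x) : ∃ l r, IsPerronPair K S l r := by
  have hsqrt : ∀ x ∈ S, 0 < √(m x) := fun x hx => Real.sqrt_pos.2 (hm x hx)
  obtain ⟨l, f, hf⟩ :=
    (hK.diagConj hsqrt).exists_isPerronPair_of_symm (hK.diagConj_sqrt_comm hm hrev)
  exact ⟨l, _, hK.isPerronPair_of_diagConj hsqrt hf⟩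

end IsIrreducibleOn

namespace IsPerronPair

variable [Fintype A]

theorem nonneg (h : IsPerronPair K S l r) (x : A) : 0 ≤ r x := by
  by_cases hx : x ∈ S
  · exact (h.pos hx).le
  · exact (h.eq_zero hx).ge

/-- Maximum principle: if `1 ≤ l` then `r` is constant and every row sum is `1` along the paths
starting at a maximum of `r`. -/
theorem eigenvalue_lt_one (h : IsPerronPair K S l r) (hK : IsIrreducibleOn K S)
    (hrow : ∀ x, ∑ y, K x y ≤ 1) {z : A} (hz : z ∈ S) (hz_row : ∑ y, K z y < 1) : l < 1 := by
  by_contra! hl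
  have : Nonempty A := ⟨z⟩
  obtain ⟨a, ha⟩ := Finite.exists_max r
  have ha_pos : 0 < r a := (h.pos hz).trans_le (ha z)
  have haS : a ∈ S := not_not.1 fun haS => ha_pos.ne' (h.eq_zero haS)
  have hle : ∀ x y, K x y * r y ≤ K x y * r a := fun x y =>
    mul_le_mul_of_nonneg_left (ha y) (hK.nonneg x y)
  have hsum : ∀ x, r x = r a → r a ≤ ∑ y, K x y * r y := fun x hx => by
    rw [h.sum_mul, hx]
    exact le_mul_of_one_le_left ha_pos.le hl
  have hstep : ∀ x y, r x = r a → 0 < K x y → r y = r a := by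
    intro x y hx hxy
    by_contra hy
    refine (hsum x hx).not_gt ?_
    calc ∑ y, K x y * r y < ∑ y, K x y * r a :=
          Finset.sum_lt_sum (fun y _ => hle x y)
            ⟨y, Finset.mem_univ y, mul_lt_mul_of_pos_left ((ha y).lt_of_ne hy) hxy⟩
      _ ≤ r a := by
          rw [← Finset.sum_mul]
          exact mul_le_of_le_one_left ha_pos.le (hrow x)
  have hza : r z = r a := (hK.reflTransGen haS hz).rec rfl fun _ hxy ih => hstep _ _ ih hxy
  refine (hsum z hza).not_gt ?_
  calc ∑ y, K z y * r y ≤ ∑ y, K z y * r a := Finset.sum_le_sum fun y _ => hle z y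
    _ < r a := by
        rw [← Finset.sum_mul]
        exact mul_lt_of_lt_one_left ha_pos hz_row

theorem neg_log_le_relEntInt (h : IsPerronPair K S l r) (hK : ∀ x y, 0 ≤ K x y) {ν : A → ℝ}
    {q : A → A → ℝ} (hν : ∀ x, 0 ≤ ν x) (hν_sum : ∑ x, ν x = 1) (hνS : ∀ x, ν x ≠ 0 → x ∈ S)
    (hq : ∀ x y, 0 ≤ q x y) (hq_sum : ∀ x ∈ S, ∑ y, q x y = 1) (hinv : Invariant ν q) :
    ((-Real.log l : ℝ) : EReal) ≤ relEntInt ν q K := by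
  rw [← hinv.sum_mul_sum_log_sub_log hν_sum h.eigenvalue_pos.ne'
    fun x hx => (h.pos (hνS x hx)).ne']
  refine coe_sum_le_relEntInt hν fun x hx => ?_
  rw [← h.sum_mul x]
  exact sum_mul_log_sub_log_sum_le_relEnt (hq x) (hq_sum x (hνS x hx)) (hK x) h.nonneg
    fun y hy => h.pos (hνS y (hinv.ne_zero_of_ne_zero hν hq hx hy))

/-- The Doob transform of `K` by its Perron eigenfunction. -/
def doob (K : A → A → ℝ) (l : ℝ) (r : A → ℝ) (x y : A) : ℝ := K x y * r y / (l * r x)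

theorem sum_doob (h : IsPerronPair K S l r) {x : A} (hx : x ∈ S) : ∑ y, doob K l r x y = 1 := by
  simp only [doob]
  rw [← Finset.sum_div, h.sum_mul, div_self (mul_pos h.eigenvalue_pos (h.pos hx)).ne']

theorem invariant_doob (h : IsPerronPair K S l r) (hrev : ∀ x y, m x * K x y = m y * K y x)
    (Z : ℝ) : Invariant (fun x => m x * r x ^ 2 / Z) (doob K l r) := by
  intro y
  have hl := h.eigenvalue_pos.ne'
  have hterm : ∀ x, m x * r x ^ 2 / Z * doob K l r x y =
      r y * m y / (l * Z) * (K y x * r x) := by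
    intro x
    by_cases hx : x ∈ S
    · have hrx := (h.pos hx).ne'
      calc m x * r x ^ 2 / Z * doob K l r x y = r y * r x / (l * Z) * (m x * K x y) := by
            simp only [doob]
            field_simp
        _ = r y * m y / (l * Z) * (K y x * r x) := by rw [hrev]; ring
    · simp [h.eq_zero hx]
  simp only [hterm]
  rw [← Finset.mul_sum, h.sum_mul]
  field_simp

theorem relEntInt_doob (h : IsPerronPair K S l r) {ν : A → ℝ} (hν_sum : ∑ x, ν x = 1)
    (hνS : ∀ x, ν x ≠ 0 → x ∈ S) (hinv : Invariant ν (doob K l r)) :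
    relEntInt ν (doob K l r) K = ((-Real.log l : ℝ) : EReal) := by
  rw [← hinv.sum_mul_sum_log_sub_log hν_sum h.eigenvalue_pos.ne'
    fun x hx => (h.pos (hνS x hx)).ne']
  refine relEntInt_eq_coe_sum fun x hx => ?_
  have hZ := (mul_pos h.eigenvalue_pos (h.pos (hνS x hx))).ne'
  have htilt : doob K l r x = fun y => K x y * r y / ∑ z, K x z * r z :=
    funext fun y => by rw [doob, h.sum_mul]
  rw [← h.sum_mul x] at hZ ⊢
  rw [htilt]
  exact relEnt_tilt hZ

end IsPerronPair

end Perron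

section KilledKernel

variable {V : Type} {F F' : Finset (Sym2 V)} {v₁ x y : V}

theorem memVerts_left (h : s(x, y) ∈ F) : memVerts F x := ⟨_, h, Sym2.mem_mk_left x y⟩

theorem memVerts_right (h : s(x, y) ∈ F) : memVerts F y := ⟨_, h, Sym2.mem_mk_right x y⟩

theorem memVerts.exists_mk_mem (h : memVerts F x) : ∃ y, s(x, y) ∈ F := by
  obtain ⟨e, he, y, rfl⟩ := h
  exact ⟨y, he⟩

theorem gw_pos [DecidableEq V] {δ : ℝ} (hδ : 0 < δ) (F : Finset (Sym2 V)) (e : Sym2 V) :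
    0 < gw δ F e := by
  unfold gw
  split_ifs
  exacts [hδ, one_pos]

variable [Fintype V] {G : SimpleGraph V} [DecidableRel G.Adj]

theorem adj_of_mk_mem (hF : F ⊆ G.edgeFinset) (h : s(x, y) ∈ F) : G.Adj x y := by
  simpa using hF h

theorem exists_mk_mem_sdiff_of_not_subset (hF : memVerts F v₁) (hF' : F' ∈ scrS G v₁)
    (hne : ¬ F' ⊆ F) : ∃ a b, memVerts F a ∧ s(a, b) ∈ F' ∧ s(a, b) ∉ F := by
  obtain ⟨e, he', he⟩ := Finset.not_subset.1 hne
  induction e using Sym2.ind with | _ c d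
  by_cases hc : memVerts F c
  · exact ⟨c, d, hc, he', he⟩
  obtain ⟨w⟩ := hF'.2.2 v₁ c hF'.2.1 (memVerts_left he')
  obtain ⟨⟨⟨a, b⟩, hab⟩, -, ha, hb⟩ := w.exists_boundary_dart {x | memVerts F x} hF hc
  exact ⟨a, b, ha, ((SimpleGraph.fromEdgeSet_adj _).1 hab).1, fun h => hb (memVerts_right h)⟩

variable [DecidableEq V] {δ : ℝ}

/-- The normalizing constant of `phat`, which is a reversing weight for the killed kernel. -/
def totalWeight (G : SimpleGraph V) [DecidableRel G.Adj] (δ : ℝ) (F : Finset (Sym2 V)) (x : V) :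
    ℝ :=
  ∑ z ∈ G.neighborFinset x, gw δ F s(x, z)

/-- The substochastic kernel of the walk with traversed edge set `F`, killed when it leaves `F`. -/
def killed (G : SimpleGraph V) [DecidableRel G.Adj] (δ : ℝ) (F : Finset (Sym2 V)) (x y : V) : ℝ :=
  if s(x, y) ∈ F then phat G δ F x y else 0

theorem totalWeight_nonneg (hδ : 0 < δ) (F : Finset (Sym2 V)) (x : V) :
    0 ≤ totalWeight G δ F x :=
  Finset.sum_nonneg fun _ _ => (gw_pos hδ F _).le

theorem totalWeight_pos (hδ : 0 < δ) (F : Finset (Sym2 V)) (h : G.Adj x y) :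
    0 < totalWeight G δ F x :=
  Finset.sum_pos (fun _ _ => gw_pos hδ F _) ⟨y, by simpa using h⟩

theorem phat_pos (hδ : 0 < δ) (F : Finset (Sym2 V)) (h : G.Adj x y) : 0 < phat G δ F x y := by
  rw [phat, if_pos h]
  exact div_pos (gw_pos hδ F _) (totalWeight_pos hδ F h)

theorem phat_nonneg (hδ : 0 < δ) (F : Finset (Sym2 V)) (x y : V) : 0 ≤ phat G δ F x y := by
  by_cases h : G.Adj x y
  · exact (phat_pos hδ F h).le
  · rw [phat, if_neg h]

theorem sum_phat_le_one (F : Finset (Sym2 V)) (x : V) : ∑ y, phat G δ F x y ≤ 1 := by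
  have hsum : ∑ y, phat G δ F x y = totalWeight G δ F x / totalWeight G δ F x := by
    simp only [phat, totalWeight, Finset.sum_div, ← Finset.sum_filter,
      SimpleGraph.neighborFinset_eq_filter]
  exact hsum.trans_le (div_self_le_one _)

theorem killed_of_mem (h : s(x, y) ∈ F) : killed G δ F x y = phat G δ F x y := if_pos h

theorem killed_of_notMem (h : s(x, y) ∉ F) : killed G δ F x y = 0 := if_neg h

theorem mk_mem_of_killed_ne_zero (h : killed G δ F x y ≠ 0) : s(x, y) ∈ F :=
  not_not.1 (mt killed_of_notMem h)

theorem killed_pos (hδ : 0 < δ) (hF : F ⊆ G.edgeFinset) (h : s(x, y) ∈ F) :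
    0 < killed G δ F x y :=
  (phat_pos hδ F (adj_of_mk_mem hF h)).trans_eq (killed_of_mem h).symm

theorem killed_nonneg (hδ : 0 < δ) (F : Finset (Sym2 V)) (x y : V) : 0 ≤ killed G δ F x y := by
  unfold killed
  split_ifs
  exacts [phat_nonneg hδ F x y, le_rfl]

theorem killed_le_phat (hδ : 0 < δ) (F : Finset (Sym2 V)) (x y : V) :
    killed G δ F x y ≤ phat G δ F x y := by
  unfold killed
  split_ifs
  exacts [le_rfl, phat_nonneg hδ F x y]

theorem sum_killed_le_one (hδ : 0 < δ) (F : Finset (Sym2 V)) (x : V) :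
    ∑ y, killed G δ F x y ≤ 1 :=
  (Finset.sum_le_sum fun y _ => killed_le_phat hδ F x y).trans (sum_phat_le_one F x)

theorem sum_killed_lt_one (hδ : 0 < δ) (h : G.Adj x y) (hF : s(x, y) ∉ F) :
    ∑ z, killed G δ F x z < 1 := by
  refine (Finset.sum_lt_sum (fun z _ => killed_le_phat hδ F x z)
    ⟨y, Finset.mem_univ y, ?_⟩).trans_le (sum_phat_le_one F x)
  rw [killed_of_notMem hF]
  exact phat_pos hδ F h

theorem totalWeight_mul_killed (hδ : 0 < δ) (hF : F ⊆ G.edgeFinset) (x y : V) :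
    totalWeight G δ F x * killed G δ F x y = if s(x, y) ∈ F then δ else 0 := by
  split_ifs with h
  · have hadj := adj_of_mk_mem hF h
    rw [killed_of_mem h, phat, if_pos hadj, gw, if_pos h]
    exact mul_div_cancel₀ δ (totalWeight_pos hδ F hadj).ne'
  · rw [killed_of_notMem h, mul_zero]

theorem totalWeight_mul_killed_comm (hδ : 0 < δ) (hF : F ⊆ G.edgeFinset) (x y : V) :
    totalWeight G δ F x * killed G δ F x y = totalWeight G δ F y * killed G δ F y x := by
  rw [totalWeight_mul_killed hδ hF, totalWeight_mul_killed hδ hF, Sym2.eq_swap]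

theorem isIrreducibleOn_killed (hδ : 0 < δ) (hF : F ∈ scrS G v₁) :
    IsIrreducibleOn (killed G δ F) {x | memVerts F x} where
  nonneg := killed_nonneg hδ F
  mem_left h := memVerts_left (mk_mem_of_killed_ne_zero h)
  mem_right h := memVerts_right (mk_mem_of_killed_ne_zero h)
  exists_ne_zero := by
    obtain ⟨y, hy⟩ := memVerts.exists_mk_mem hF.2.1
    exact ⟨v₁, y, (killed_pos hδ hF.1 hy).ne'⟩
  reflTransGen hx hy :=
    Relation.ReflTransGen.mono
      (fun _ _ h => killed_pos hδ hF.1 ((SimpleGraph.fromEdgeSet_adj _).1 h).1) _ _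
      ((SimpleGraph.reachable_iff_reflTransGen _ _).1 (hF.2.2 _ _ hx hy))

theorem exists_isPerronPair_killed (hδ : 0 < δ) (hF : F ∈ scrS G v₁) :
    ∃ l r, IsPerronPair (killed G δ F) {x | memVerts F x} l r :=
  (isIrreducibleOn_killed hδ hF).exists_isPerronPair
    (fun _ hx => totalWeight_pos hδ F (adj_of_mk_mem hF.1 hx.exists_mk_mem.choose_spec))
    (totalWeight_mul_killed_comm hδ hF.1)

theorem eigenvalue_lt_one_of_not_subset {l : ℝ} {r : V → ℝ} (hδ : 0 < δ) (hF : F ∈ scrS G v₁)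
    (hF' : F' ∈ scrS G v₁) (hne : ¬ F' ⊆ F)
    (h : IsPerronPair (killed G δ F) {x | memVerts F x} l r) : l < 1 := by
  obtain ⟨a, b, ha, hab', hab⟩ := exists_mk_mem_sdiff_of_not_subset hF.2.1 hF' hne
  exact h.eigenvalue_lt_one (isIrreducibleOn_killed hδ hF) (sum_killed_le_one hδ F) ha
    (sum_killed_lt_one hδ (adj_of_mk_mem hF'.1 hab') hab)

theorem relEntInt_phat_eq_killed (ν : V → ℝ) {q : V → V → ℝ}
    (hq : ∀ x y, q x y ≠ 0 → s(x, y) ∈ F) :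
    relEntInt ν q (phat G δ F) = relEntInt ν q (killed G δ F) := by
  have hzero : ∀ x y, s(x, y) ∉ F → q x y = 0 := fun x y h => not_not.1 (mt (hq x y) h)
  have hac : ∀ x y, (killed G δ F x y = 0 → q x y = 0) ↔ (phat G δ F x y = 0 → q x y = 0) := by
    intro x y
    by_cases h : s(x, y) ∈ F
    · rw [killed_of_mem h]
    · simp [hzero x y h]
  have hterm : ∀ x y, q x y * Real.log (q x y / killed G δ F x y) =
      q x y * Real.log (q x y / phat G δ F x y) := by
    intro x y
    by_cases h : s(x, y) ∈ F
    · rw [killed_of_mem h]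
    · simp [hzero x y h]
  simp only [relEntInt, relEnt, hac, hterm]

variable {S0 : Set (Finset (Sym2 V))} {l : ℝ} {r : V → ℝ}

theorem doob_killed_mem_TE (hδ : 0 < δ)
    (h : IsPerronPair (killed G δ F) {x | memVerts F x} l r) :
    IsPerronPair.doob (killed G δ F) l r ∈ TE F := by
  refine ⟨fun x y => ?_, fun x hx => h.sum_doob hx, fun x y hxy => ?_⟩
  · exact div_nonneg (mul_nonneg (killed_nonneg hδ F x y) (h.nonneg y))
      (mul_nonneg h.eigenvalue_pos.le (h.nonneg x))
  · exact mk_mem_of_killed_ne_zero (G := G) (δ := δ) fun h0 =>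
      hxy (by simp [IsPerronPair.doob, h0])

theorem alphaC_le_neg_log_eigenvalue (hδ : 0 < δ) (hF : F ∈ scrS G v₁) (hFS : F ∈ S0)
    (h : IsPerronPair (killed G δ F) {x | memVerts F x} l r) :
    alphaC G δ S0 ≤ ((-Real.log l : ℝ) : EReal) := by
  let Z := ∑ x, totalWeight G δ F x * r x ^ 2
  have hterm : ∀ x, 0 ≤ totalWeight G δ F x * r x ^ 2 := fun x =>
    mul_nonneg (totalWeight_nonneg hδ F x) (sq_nonneg _)
  have hZ : 0 < Z := by
    obtain ⟨y, hy⟩ := memVerts.exists_mk_mem hF.2.1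
    exact Finset.sum_pos' (fun x _ => hterm x) ⟨v₁, Finset.mem_univ _,
      mul_pos (totalWeight_pos hδ F (adj_of_mk_mem hF.1 hy)) (pow_pos (h.pos hF.2.1) 2)⟩
  let ν : V → ℝ := fun x => totalWeight G δ F x * r x ^ 2 / Z
  have hν : ∀ x, 0 ≤ ν x := fun x => div_nonneg (hterm x) hZ.le
  have hν_sum : ∑ x, ν x = 1 := by rw [← Finset.sum_div, div_self hZ.ne']
  have hνF : ∀ x, ν x ≠ 0 → memVerts F x := fun x hx =>
    not_not.1 fun hxF => hx (by simp [ν, h.eq_zero hxF])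
  have hinv : Invariant ν (IsPerronPair.doob (killed G δ F) l r) :=
    h.invariant_doob (totalWeight_mul_killed_comm hδ hF.1) Z
  have hTE := doob_killed_mem_TE hδ h
  exact sInf_le ⟨⟨ν, hν, hν_sum⟩, F, _, hFS, hTE, hνF, hinv,
    by rw [relEntInt_phat_eq_killed ν hTE.2.2, h.relEntInt_doob hν_sum hνF hinv]⟩

theorem le_alphaC {c : EReal} (hδ : 0 < δ)
    (hc : ∀ F ∈ S0, ∃ l r, IsPerronPair (killed G δ F) {x | memVerts F x} l r ∧
      c ≤ ((-Real.log l : ℝ) : EReal)) : c ≤ alphaC G δ S0 := by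
  refine le_sInf ?_
  rintro _ ⟨⟨ν, hν, hν_sum⟩, F, q, hF, ⟨hq, hq_sum, hqF⟩, hνF, hinv, rfl⟩
  obtain ⟨l, r, h, hcl⟩ := hc F hF
  rw [relEntInt_phat_eq_killed ν hqF]
  exact hcl.trans (h.neg_log_le_relEntInt (killed_nonneg hδ F) hν hν_sum hνF hq hq_sum hinv)

theorem alphaC_le_coe_iff (hδ : 0 < δ) (hS0 : S0 ⊆ scrS G v₁) {α : ℝ} :
    alphaC G δ S0 ≤ α ↔
      ∃ F ∈ S0, ∃ l r, IsPerronPair (killed G δ F) {x | memVerts F x} l r ∧ Real.exp (-α) ≤ l := by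
  have hlog : ∀ {l : ℝ}, 0 < l → (-Real.log l ≤ α ↔ Real.exp (-α) ≤ l) := fun hl => by
    rw [neg_le, Real.le_log_iff_exp_le hl]
  constructor
  · intro hα
    choose! l r hlr using fun F (hF : F ∈ S0) => exists_isPerronPair_killed hδ (hS0 hF)
    have hne : S0.Nonempty := Set.nonempty_iff_ne_empty.2 fun h => by
      simp [alphaC, h] at hα
    obtain ⟨F, hF, hmax⟩ := Set.exists_max_image S0 l S0.toFinite hne
    have hle : ((-Real.log (l F) : ℝ) : EReal) ≤ alphaC G δ S0 :=
      le_alphaC hδ fun F' hF' => ⟨l F', r F', hlr F' hF', EReal.coe_le_coe_iff.2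
        (neg_le_neg (Real.log_le_log (hlr F' hF').eigenvalue_pos (hmax F' hF')))⟩
    exact ⟨F, hF, l F, r F, hlr F hF, (hlog (hlr F hF).eigenvalue_pos).1
      (EReal.coe_le_coe_iff.1 (hle.trans hα))⟩
  · rintro ⟨F, hF, l, r, h, hl⟩
    exact (alphaC_le_neg_log_eigenvalue hδ (hS0 hF) hF h).trans
      (EReal.coe_le_coe_iff.2 ((hlog h.eigenvalue_pos).2 hl))

theorem exists_lt_exp_forall_eigenvalue_lt (hδ : 0 < δ) (hS0 : S0 ⊆ scrS G v₁) {α : ℝ}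
    (hα : ¬ ∃ F ∈ S0, ∃ l r, IsPerronPair (killed G δ F) {x | memVerts F x} l r ∧
      Real.exp (-α) ≤ l) :
    ∃ L > 0, L < Real.exp (-α) ∧
      ∀ F ∈ S0, ∃ l r, IsPerronPair (killed G δ F) {x | memVerts F x} l r ∧ l < L := by
  choose! l r hlr using fun F (hF : F ∈ S0) => exists_isPerronPair_killed hδ (hS0 hF)
  have hlα : ∀ F ∈ S0, l F < Real.exp (-α) := fun F hF =>
    not_le.1 fun h => hα ⟨F, hF, l F, r F, hlr F hF, h⟩
  have hlt : ∀ᶠ L in 𝓝[<] Real.exp (-α), ∀ F ∈ S0, l F < L :=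
    (eventually_all_finite S0.toFinite).2 fun F hF =>
      (eventually_gt_nhds (hlα F hF)).filter_mono nhdsWithin_le_nhds
  have hpos : ∀ᶠ L in 𝓝[<] Real.exp (-α), 0 < L :=
    (eventually_gt_nhds (Real.exp_pos _)).filter_mono nhdsWithin_le_nhds
  have hltα : ∀ᶠ L in 𝓝[<] Real.exp (-α), L < Real.exp (-α) := self_mem_nhdsWithin
  obtain ⟨L, hL, hLα, hlL⟩ := (hpos.and (hltα.and hlt)).exists
  exact ⟨L, hL, hLα, fun F hF => ⟨l F, r F, hlr F hF, hlL F hF⟩⟩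

theorem eigenvalue_lt_one_of_ne_scrS (hδ : 0 < δ) (hS0 : S0 ⊆ scrS G v₁)
    (hdec : DecreasingIn G v₁ S0) (hne : S0 ≠ scrS G v₁) (hF : F ∈ S0)
    (h : IsPerronPair (killed G δ F) {x | memVerts F x} l r) : l < 1 := by
  obtain ⟨F', hF', hF'S⟩ := Set.exists_of_ssubset (hS0.ssubset_of_ne hne)
  exact eigenvalue_lt_one_of_not_subset hδ (hS0 hF) hF'
    (fun hsub => hF'S (hdec F' F hF' (hS0 hF) hsub hF)) h

end KilledKernel

section Trajectories

theorem ofFn_snoc {A : Type*} {n : ℕ} (f : Fin (n + 1) → A) (y : A) :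
    List.ofFn (Fin.snoc f y : Fin (n + 1 + 1) → A) = List.ofFn f ++ [y] := by
  rw [List.ofFn_succ', List.concat_eq_append]
  simp

variable {V : Type} [DecidableEq V]

theorem pathEdges_append_pair (L : List V) (x y : V) :
    pathEdges (L ++ [x, y]) = insert s(x, y) (pathEdges (L ++ [x])) := by
  induction L with
  | nil => simp [pathEdges]
  | cons a t ih =>
    cases t with
    | nil => exact Finset.pair_comm _ _
    | cons b t =>
      simp only [List.cons_append, pathEdges] at ih ⊢
      rw [ih, Finset.insert_comm]

/-- The traversed edge sets of the trajectory `f` belong to `S0` at all times `1, …, n`. -/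
def StaysIn (S0 : Set (Finset (Sym2 V))) (n : ℕ) (f : Fin (n + 1) → V) : Prop :=
  ∀ k, 1 ≤ k → k ≤ n → pathEdges ((List.ofFn f).take (k + 1)) ∈ S0

variable {n : ℕ} (f : Fin (n + 1) → V) (y : V)

theorem pathEdges_ofFn_snoc : pathEdges (List.ofFn (Fin.snoc f y : Fin (n + 1 + 1) → V)) =
    insert s(f (Fin.last n), y) (pathEdges (List.ofFn f)) := by
  rw [ofFn_snoc, List.ofFn_succ' f, List.concat_eq_append, List.append_assoc]
  exact pathEdges_append_pair _ _ _

theorem staysIn_snoc (S0 : Set (Finset (Sym2 V))) :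
    StaysIn S0 (n + 1) (Fin.snoc f y : Fin (n + 1 + 1) → V) ↔
      StaysIn S0 n f ∧ insert s(f (Fin.last n), y) (pathEdges (List.ofFn f)) ∈ S0 := by
  have hlast : (List.ofFn (Fin.snoc f y : Fin (n + 1 + 1) → V)).take (n + 1 + 1) =
      List.ofFn (Fin.snoc f y : Fin (n + 1 + 1) → V) := List.take_of_length_le (by simp)
  have hinit : ∀ k ≤ n, (List.ofFn (Fin.snoc f y : Fin (n + 1 + 1) → V)).take (k + 1) =
      (List.ofFn f).take (k + 1) := fun k hk => by
    rw [ofFn_snoc, List.take_append_of_le_length (by simpa using hk)]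
  rw [← pathEdges_ofFn_snoc, ← hlast]
  constructor
  · exact fun h => ⟨fun k hk hkn => hinit k hkn ▸ h k hk (hkn.trans n.le_succ),
      h (n + 1) n.succ_pos le_rfl⟩
  · rintro ⟨hpast, hnow⟩ k hk hkn
    rcases hkn.eq_or_lt with rfl | hkn
    · exact hnow
    · rw [hinit k (Nat.lt_succ_iff.1 hkn)]
      exact hpast k hk (Nat.lt_succ_iff.1 hkn)

variable [Fintype V] {G : SimpleGraph V} [DecidableRel G.Adj] {δ : ℝ} {v₁ : V}

theorem trajProb_snoc : trajProb G δ v₁ (n + 1) (Fin.snoc f y : Fin (n + 1 + 1) → V) =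
    trajProb G δ v₁ n f * phat G δ (pathEdges (List.ofFn f)) (f (Fin.last n)) y := by
  have h0 : (Fin.snoc f y : Fin (n + 1 + 1) → V) 0 = f 0 := by simp
  have hsteps : stepsProb G δ (List.ofFn (Fin.snoc f y : Fin (n + 1 + 1) → V)).reverse =
      stepsProb G δ (List.ofFn f).reverse *
        phat G δ (pathEdges (List.ofFn f)) (f (Fin.last n)) y := by
    rw [ofFn_snoc, List.ofFn_succ' f, List.concat_eq_append]
    simp [stepsProb, mul_comm]
  rw [trajProb, trajProb, h0, hsteps, ite_mul, zero_mul]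

end Trajectories

section KilledWalk

variable {V : Type} [Fintype V] [DecidableEq V]

/-- The one-step operator of the Markov chain of pairs (traversed edge set, position), killed when
the edge set leaves `S0`. -/
def stepOp (G : SimpleGraph V) [DecidableRel G.Adj] (δ : ℝ) (S0 : Set (Finset (Sym2 V)))
    (φ : Finset (Sym2 V) → V → ℝ) (F : Finset (Sym2 V)) (x : V) : ℝ :=
  ∑ y, phat G δ F x y * if insert s(x, y) F ∈ S0 then φ (insert s(x, y) F) y else 0

/-- The probability that the killed chain started from a given state survives `n` steps. -/
def survival (G : SimpleGraph V) [DecidableRel G.Adj] (δ : ℝ) (S0 : Set (Finset (Sym2 V)))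
    (n : ℕ) : Finset (Sym2 V) → V → ℝ :=
  (stepOp G δ S0)^[n] 1

/-- The expectation of a function of the state of the walk at time `n`, on the event that its
edge set has not left `S0`. -/
def survivalExpectation (G : SimpleGraph V) [DecidableRel G.Adj] (δ : ℝ) (v₁ : V)
    (S0 : Set (Finset (Sym2 V))) (n : ℕ) (φ : Finset (Sym2 V) → V → ℝ) : ℝ :=
  ∑ f : Fin (n + 1) → V,
    if StaysIn S0 n f then trajProb G δ v₁ n f * φ (pathEdges (List.ofFn f)) (f (Fin.last n))
    else 0

variable {G : SimpleGraph V} [DecidableRel G.Adj] {δ : ℝ} {v₁ : V} {S0 : Set (Finset (Sym2 V))}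
  {φ ψ : Finset (Sym2 V) → V → ℝ}

theorem survivalExpectation_zero : survivalExpectation G δ v₁ S0 0 φ = φ ∅ v₁ := by
  have hstays : ∀ f, StaysIn S0 0 f := fun _ k hk hk0 => by omega
  rw [survivalExpectation, ← (Equiv.funUnique (Fin 1) V).symm.sum_comp, Finset.sum_eq_single v₁]
  · rw [if_pos (hstays _)]
    simp [trajProb, stepsProb, pathEdges]
  · intro x _ hx
    simp [trajProb, hx]
  · simp

theorem survivalExpectation_succ (n : ℕ) : survivalExpectation G δ v₁ S0 (n + 1) φ =
    survivalExpectation G δ v₁ S0 n (stepOp G δ S0 φ) := by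
  unfold survivalExpectation
  rw [← (Fin.snocEquiv fun _ : Fin (n + 1 + 1) => V).sum_comp, Fintype.sum_prod_type_right]
  refine Finset.sum_congr rfl fun f _ => ?_
  simp only [Fin.snocEquiv, Equiv.coe_fn_mk, staysIn_snoc, trajProb_snoc, pathEdges_ofFn_snoc,
    Fin.snoc_last]
  by_cases hf : StaysIn S0 n f
  · simp only [hf, true_and, if_true, stepOp, Finset.mul_sum, mul_ite, mul_zero, mul_assoc]
  · simp [hf]

theorem survivalExpectation_eq_iterate (n : ℕ) :
    survivalExpectation G δ v₁ S0 n φ = (stepOp G δ S0)^[n] φ ∅ v₁ := by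
  induction n generalizing φ with
  | zero => exact survivalExpectation_zero
  | succ n ih => rw [survivalExpectation_succ, ih, Function.iterate_succ_apply]

theorem probTgt_eq_survival (n : ℕ) : probTgt G δ v₁ S0 n = survival G δ S0 n ∅ v₁ := by
  rw [survival, ← survivalExpectation_eq_iterate]
  simp [probTgt, survivalExpectation, StaysIn]

theorem survival_succ (n : ℕ) :
    survival G δ S0 (n + 1) = stepOp G δ S0 (survival G δ S0 n) :=
  Function.iterate_succ_apply' _ _ _

theorem stepOp_nonneg (hδ : 0 < δ) (hφ : ∀ F x, 0 ≤ φ F x) (F : Finset (Sym2 V)) (x : V) :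
    0 ≤ stepOp G δ S0 φ F x :=
  Finset.sum_nonneg fun y _ =>
    mul_nonneg (phat_nonneg hδ F x y) (ite_nonneg (hφ _ _) le_rfl)

theorem stepOp_mono (hδ : 0 < δ) (h : ∀ F x, φ F x ≤ ψ F x) (F : Finset (Sym2 V)) (x : V) :
    stepOp G δ S0 φ F x ≤ stepOp G δ S0 ψ F x := by
  refine Finset.sum_le_sum fun y _ => mul_le_mul_of_nonneg_left ?_ (phat_nonneg hδ F x y)
  split_ifs
  exacts [h _ _, le_rfl]

theorem stepOp_const_mul (c : ℝ) (F : Finset (Sym2 V)) (x : V) :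
    stepOp G δ S0 (fun F x => c * φ F x) F x = c * stepOp G δ S0 φ F x := by
  simp only [stepOp, Finset.mul_sum, mul_ite, mul_zero, mul_left_comm]

theorem stepOp_le {M : ℝ} (hδ : 0 < δ) (hM : 0 ≤ M) {F : Finset (Sym2 V)} {x : V}
    (h : ∀ y, insert s(x, y) F ∈ S0 → φ (insert s(x, y) F) y ≤ M) :
    stepOp G δ S0 φ F x ≤ M := by
  calc stepOp G δ S0 φ F x ≤ ∑ y, phat G δ F x y * M := by
        refine Finset.sum_le_sum fun y _ => mul_le_mul_of_nonneg_left ?_ (phat_nonneg hδ F x y)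
        split_ifs with hy
        exacts [h y hy, hM]
    _ ≤ M := by
        rw [← Finset.sum_mul]
        exact mul_le_of_le_one_left hM (sum_phat_le_one F x)

theorem stepOp_le_sum_killed_add {M : ℝ} (hδ : 0 < δ) (hM : 0 ≤ M) {F : Finset (Sym2 V)}
    (hF : F ∈ S0) {x : V}
    (h : ∀ y, s(x, y) ∉ F → insert s(x, y) F ∈ S0 → φ (insert s(x, y) F) y ≤ M) :
    stepOp G δ S0 φ F x ≤ ∑ y, killed G δ F x y * φ F y + M := by
  have hterm : ∀ y, (phat G δ F x y *
      if insert s(x, y) F ∈ S0 then φ (insert s(x, y) F) y else 0) ≤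
        killed G δ F x y * φ F y + phat G δ F x y * M := by
    intro y
    have hp := phat_nonneg (G := G) hδ F x y
    by_cases hy : s(x, y) ∈ F
    · rw [Finset.insert_eq_of_mem hy, if_pos hF, killed_of_mem hy]
      exact le_add_of_nonneg_right (mul_nonneg hp hM)
    · rw [killed_of_notMem hy, zero_mul, zero_add]
      refine mul_le_mul_of_nonneg_left ?_ hp
      split_ifs with hS
      exacts [h y hy hS, hM]
  refine (Finset.sum_le_sum fun y _ => hterm y).trans ?_
  rw [Finset.sum_add_distrib, ← Finset.sum_mul]
  exact add_le_add_right (mul_le_of_le_one_left hM (sum_phat_le_one F x)) _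

theorem sum_killed_mul_le_stepOp (hδ : 0 < δ) (hφ : ∀ F x, 0 ≤ φ F x) {F : Finset (Sym2 V)}
    (hF : F ∈ S0) (x : V) : ∑ y, killed G δ F x y * φ F y ≤ stepOp G δ S0 φ F x := by
  refine Finset.sum_le_sum fun y _ => ?_
  by_cases hy : s(x, y) ∈ F
  · rw [Finset.insert_eq_of_mem hy, if_pos hF, killed_of_mem hy]
  · rw [killed_of_notMem hy, zero_mul]
    exact mul_nonneg (phat_nonneg hδ F x y) (ite_nonneg (hφ _ _) le_rfl)

theorem phat_mul_le_stepOp (hδ : 0 < δ) (hφ : ∀ F x, 0 ≤ φ F x) {F : Finset (Sym2 V)} {x y : V}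
    (hxy : insert s(x, y) F ∈ S0) :
    phat G δ F x y * φ (insert s(x, y) F) y ≤ stepOp G δ S0 φ F x := by
  calc phat G δ F x y * φ (insert s(x, y) F) y
      = phat G δ F x y * if insert s(x, y) F ∈ S0 then φ (insert s(x, y) F) y else 0 := by
        rw [if_pos hxy]
    _ ≤ stepOp G δ S0 φ F x :=
        Finset.single_le_sum (f := fun z => phat G δ F x z *
            if insert s(x, z) F ∈ S0 then φ (insert s(x, z) F) z else 0)
          (fun z _ => mul_nonneg (phat_nonneg hδ F x z) (ite_nonneg (hφ _ _) le_rfl))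
          (Finset.mem_univ y)

theorem survival_nonneg (hδ : 0 < δ) (n : ℕ) (F : Finset (Sym2 V)) (x : V) :
    0 ≤ survival G δ S0 n F x := by
  induction n generalizing F x with
  | zero => exact zero_le_one
  | succ n ih =>
    rw [survival_succ]
    exact stepOp_nonneg hδ ih F x

theorem survival_antitone (hδ : 0 < δ) (F : Finset (Sym2 V)) (x : V) :
    Antitone fun n => survival G δ S0 n F x := by
  refine antitone_nat_of_succ_le fun n => ?_
  induction n generalizing F x with
  | zero =>
    rw [survival_succ]
    exact stepOp_le hδ zero_le_one fun _ _ => le_rfl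
  | succ n ih =>
    rw [survival_succ n, survival_succ (n + 1)]
    exact stepOp_mono hδ ih F x

end KilledWalk

section SurvivalBounds

theorem exists_pos_forall_le {ι : Type*} [Finite ι] (f : ι → ℝ) : ∃ R > 0, ∀ i, f i ≤ R := by
  obtain ⟨R, hR⟩ := (Set.finite_range f).bddAbove
  exact ⟨max R 1, by positivity, fun i => (hR (Set.mem_range_self i)).trans (le_max_left _ _)⟩

theorem exists_pos_forall_mul_le {ι : Type*} [Finite ι] {p : ι → Prop} {f : ι → ℝ}
    (hf : ∀ i, p i → 0 < f i) (R : ℝ) : ∃ κ > 0, κ ≤ 1 ∧ ∀ i, p i → κ * R ≤ f i := by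
  have htendsto : Tendsto (fun κ : ℝ => κ * R) (𝓝[>] 0) (𝓝 0) := by
    simpa using ((continuous_mul_const R).tendsto 0).mono_left nhdsWithin_le_nhds
  have hsmall : ∀ᶠ κ : ℝ in 𝓝[>] 0, ∀ i, p i → κ * R ≤ f i :=
    eventually_all.2 fun i => eventually_imp_distrib_left.2 fun hi =>
      htendsto.eventually_le_const (hf i hi)
  have hone : ∀ᶠ κ : ℝ in 𝓝[>] 0, κ ≤ 1 :=
    (eventually_le_nhds one_pos).filter_mono nhdsWithin_le_nhds
  have hpos : ∀ᶠ κ : ℝ in 𝓝[>] 0, 0 < κ := self_mem_nhdsWithin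
  exact (hpos.and (hone.and hsmall)).exists

variable {V : Type} [DecidableEq V]

/-- The Perron eigenfunctions `r F`, glued with weights `κ ^ |F|` that make moves along new edges
cheap, and a constant `B` at the states which the walk inside `S0` visits at most at time `0`. -/
def lyapunov (S0 : Set (Finset (Sym2 V))) (r : Finset (Sym2 V) → V → ℝ) (κ B : ℝ)
    (F : Finset (Sym2 V)) (x : V) : ℝ :=
  if F ∈ S0 ∧ memVerts F x then κ ^ F.card * r F x else B

variable {S0 : Set (Finset (Sym2 V))} {l : Finset (Sym2 V) → ℝ} {r : Finset (Sym2 V) → V → ℝ}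
  {κ B R L : ℝ}

theorem lyapunov_insert {F : Finset (Sym2 V)} {x y : V} (h : insert s(x, y) F ∈ S0) :
    lyapunov S0 r κ B (insert s(x, y) F) y =
      κ ^ (insert s(x, y) F).card * r (insert s(x, y) F) y :=
  if_pos ⟨h, memVerts_right (Finset.mem_insert_self _ _)⟩

variable [Fintype V] {G : SimpleGraph V} [DecidableRel G.Adj] {δ : ℝ}

theorem exists_survival_le_of_stepOp_le {φ : Finset (Sym2 V) → V → ℝ} (hδ : 0 < δ)
    (hL : 0 ≤ L) (hφ : ∀ F x, 0 < φ F x) (hstep : ∀ F x, stepOp G δ S0 φ F x ≤ L * φ F x) :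
    ∃ C, ∀ n F x, survival G δ S0 n F x ≤ C * L ^ n * φ F x := by
  obtain ⟨C, hC, hle⟩ := exists_pos_forall_le fun p : Finset (Sym2 V) × V => (φ p.1 p.2)⁻¹
  refine ⟨C, fun n => ?_⟩
  induction n with
  | zero =>
    intro F x
    rw [pow_zero, mul_one]
    exact (inv_le_iff_one_le_mul₀ (hφ F x)).1 (hle (F, x))
  | succ n ih =>
    intro F x
    rw [survival_succ]
    calc stepOp G δ S0 (survival G δ S0 n) F x
        ≤ C * L ^ n * stepOp G δ S0 φ F x :=
          (stepOp_mono hδ ih F x).trans_eq (stepOp_const_mul _ F x)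
      _ ≤ C * L ^ n * (L * φ F x) := mul_le_mul_of_nonneg_left (hstep F x) (by positivity)
      _ = C * L ^ (n + 1) * φ F x := by ring

theorem sum_killed_mul_lyapunov {F : Finset (Sym2 V)} (hF : F ∈ S0)
    (h : IsPerronPair (killed G δ F) {x | memVerts F x} (l F) (r F)) (x : V) :
    ∑ y, killed G δ F x y * lyapunov S0 r κ B F y = κ ^ F.card * (l F * r F x) := by
  rw [← h.sum_mul x, Finset.mul_sum]
  refine Finset.sum_congr rfl fun y _ => ?_
  by_cases hy : s(x, y) ∈ F
  · rw [lyapunov, if_pos ⟨hF, memVerts_right hy⟩, mul_left_comm]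
  · simp [killed_of_notMem hy]

theorem stepOp_lyapunov_le (hδ : 0 < δ) (hκ : 0 < κ) (hκ1 : κ ≤ 1) (hL : 0 < L) (hR : 0 < R)
    (hrR : ∀ F x, r F x ≤ R)
    (h : ∀ F ∈ S0, IsPerronPair (killed G δ F) {x | memVerts F x} (l F) (r F))
    (hgap : ∀ F ∈ S0, ∀ x, memVerts F x → κ * R ≤ (L - l F) * r F x) (F : Finset (Sym2 V))
    (x : V) :
    stepOp G δ S0 (lyapunov S0 r κ (R / L)) F x ≤ L * lyapunov S0 r κ (R / L) F x := by
  by_cases hx : F ∈ S0 ∧ memVerts F x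
  · have hnew : ∀ y, s(x, y) ∉ F → insert s(x, y) F ∈ S0 →
        lyapunov S0 r κ (R / L) (insert s(x, y) F) y ≤ κ ^ (F.card + 1) * R := fun y hy hS => by
      rw [lyapunov_insert hS, Finset.card_insert_of_notMem hy]
      exact mul_le_mul_of_nonneg_left (hrR _ _) (by positivity)
    calc stepOp G δ S0 (lyapunov S0 r κ (R / L)) F x
        ≤ κ ^ F.card * (l F * r F x) + κ ^ (F.card + 1) * R :=
          (stepOp_le_sum_killed_add hδ (by positivity) hx.1 hnew).trans_eq
            (by rw [sum_killed_mul_lyapunov hx.1 (h F hx.1)])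
      _ = κ ^ F.card * (l F * r F x + κ * R) := by ring
      _ ≤ κ ^ F.card * (L * r F x) :=
          mul_le_mul_of_nonneg_left (by linarith [hgap F hx.1 x hx.2]) (by positivity)
      _ = L * lyapunov S0 r κ (R / L) F x := by rw [lyapunov, if_pos hx]; ring
  · rw [lyapunov, if_neg hx, mul_div_cancel₀ R hL.ne']
    refine stepOp_le hδ hR.le fun y hS => ?_
    rw [lyapunov_insert hS]
    calc κ ^ (insert s(x, y) F).card * r (insert s(x, y) F) y
        ≤ κ ^ (insert s(x, y) F).card * R :=
          mul_le_mul_of_nonneg_left (hrR _ _) (by positivity)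
      _ ≤ R := mul_le_of_le_one_left hR.le (pow_le_one₀ hκ.le hκ1)

theorem exists_survival_le (hδ : 0 < δ) (hL : 0 < L)
    (h : ∀ F ∈ S0, ∃ l r, IsPerronPair (killed G δ F) {x | memVerts F x} l r ∧ l < L)
    (F : Finset (Sym2 V)) (x : V) : ∃ C, ∀ n, survival G δ S0 n F x ≤ C * L ^ n := by
  choose! l r hlr hlL using h
  obtain ⟨R, hR, hrR⟩ := exists_pos_forall_le fun p : Finset (Sym2 V) × V => r p.1 p.2
  obtain ⟨κ, hκ, hκ1, hgap⟩ := exists_pos_forall_mul_le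
    (p := fun p : Finset (Sym2 V) × V => p.1 ∈ S0 ∧ memVerts p.1 p.2)
    (f := fun p => (L - l p.1) * r p.1 p.2)
    (fun p hp => mul_pos (sub_pos.2 (hlL _ hp.1)) ((hlr _ hp.1).pos hp.2)) R
  have hpos : ∀ F x, 0 < lyapunov S0 r κ (R / L) F x := by
    intro F x
    unfold lyapunov
    split_ifs with hx
    exacts [mul_pos (pow_pos hκ _) ((hlr F hx.1).pos hx.2), div_pos hR hL]
  obtain ⟨C, hC⟩ := exists_survival_le_of_stepOp_le hδ hL.le hpos
    (stepOp_lyapunov_le hδ hκ hκ1 hL hR (fun F x => hrR (F, x)) hlr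
      fun F hF x hx => hgap (F, x) ⟨hF, hx⟩)
  exact ⟨C * lyapunov S0 r κ (R / L) F x, fun n => (hC n F x).trans_eq (by ring)⟩

theorem exists_mul_pow_mul_le_survival {F : Finset (Sym2 V)} {l : ℝ} {r : V → ℝ} (hδ : 0 < δ)
    (hF : F ∈ S0) (h : IsPerronPair (killed G δ F) {x | memVerts F x} l r) :
    ∃ c > 0, ∀ n x, c * l ^ n * r x ≤ survival G δ S0 n F x := by
  obtain ⟨R, hR, hrR⟩ := exists_pos_forall_le r
  refine ⟨R⁻¹, inv_pos.2 hR, fun n => ?_⟩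
  induction n with
  | zero =>
    intro x
    rw [pow_zero, mul_one]
    exact inv_mul_le_one_of_le₀ (hrR x) hR.le
  | succ n ih =>
    intro x
    calc R⁻¹ * l ^ (n + 1) * r x = R⁻¹ * l ^ n * ∑ y, killed G δ F x y * r y := by
          rw [h.sum_mul]; ring
      _ = ∑ y, killed G δ F x y * (R⁻¹ * l ^ n * r y) := by
          rw [Finset.mul_sum]
          exact Finset.sum_congr rfl fun y _ => mul_left_comm _ _ _
      _ ≤ ∑ y, killed G δ F x y * survival G δ S0 n F y :=
          Finset.sum_le_sum fun y _ => mul_le_mul_of_nonneg_left (ih y) (killed_nonneg hδ F x y)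
      _ ≤ survival G δ S0 (n + 1) F x := by
          rw [survival_succ]
          exact sum_killed_mul_le_stepOp hδ (survival_nonneg hδ n) hF x

end SurvivalBounds

section Reachability

variable {V : Type} [Fintype V]

theorem insert_mem_scrS [DecidableEq V] {G : SimpleGraph V} [DecidableRel G.Adj] {v₁ a b : V}
    {F : Finset (Sym2 V)} (hF : F ⊆ G.edgeFinset)
    (hconn : ∀ x, memVerts F x → (SimpleGraph.fromEdgeSet (F : Set (Sym2 V))).Reachable a x)
    (hab : G.Adj a b) (hv : memVerts (insert s(a, b) F) v₁) : insert s(a, b) F ∈ scrS G v₁ := by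
  have hreach : ∀ x, memVerts (insert s(a, b) F) x →
      (SimpleGraph.fromEdgeSet (↑(insert s(a, b) F) : Set (Sym2 V))).Reachable a x := by
    rintro x ⟨e, he, hx⟩
    rcases Finset.mem_insert.1 he with rfl | he
    · rcases Sym2.mem_iff.1 hx with rfl | rfl
      · exact .refl _
      · exact SimpleGraph.Adj.reachable ((SimpleGraph.fromEdgeSet_adj _).2 ⟨by simp, hab.ne⟩)
    · exact (hconn x ⟨e, he, hx⟩).mono (SimpleGraph.fromEdgeSet_mono (by simp))
  refine ⟨Finset.insert_subset (by simpa using hab) hF, hv, fun x y hx hy => ?_⟩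
  exact (hreach x hx).symm.trans (hreach y hy)

variable [DecidableEq V]

/-- The states (traversed edge set, position) which the walk started at `v₁` can visit while its
edge set stays in `S0`. -/
inductive ReachableIn (G : SimpleGraph V) (v₁ : V) (S0 : Set (Finset (Sym2 V))) :
    Finset (Sym2 V) → V → Prop
  | start : ReachableIn G v₁ S0 ∅ v₁
  | step {F : Finset (Sym2 V)} {x y : V} (h : ReachableIn G v₁ S0 F x) (hxy : G.Adj x y)
      (hS : insert s(x, y) F ∈ S0) : ReachableIn G v₁ S0 (insert s(x, y) F) y

variable {G : SimpleGraph V} [DecidableRel G.Adj] {δ : ℝ} {v₁ : V} {S0 : Set (Finset (Sym2 V))}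
  {F : Finset (Sym2 V)}

theorem ReachableIn.exists_mul_survival_le {x : V} (hδ : 0 < δ) (h : ReachableIn G v₁ S0 F x) :
    ∃ c > 0, ∀ n, c * survival G δ S0 n F x ≤ survival G δ S0 n ∅ v₁ := by
  induction h with
  | start => exact ⟨1, one_pos, fun n => (one_mul _).le⟩
  | @step F x y _ hxy hS ih =>
    obtain ⟨c, hc, hle⟩ := ih
    refine ⟨c * phat G δ F x y, mul_pos hc (phat_pos hδ F hxy), fun n => ?_⟩
    calc c * phat G δ F x y * survival G δ S0 n (insert s(x, y) F) y
        ≤ c * survival G δ S0 (n + 1) F x := by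
          rw [mul_assoc, survival_succ]
          exact mul_le_mul_of_nonneg_left
            (phat_mul_le_stepOp hδ (survival_nonneg hδ n) hS) hc.le
      _ ≤ c * survival G δ S0 n F x :=
          mul_le_mul_of_nonneg_left (survival_antitone hδ F x n.le_succ) hc.le
      _ ≤ survival G δ S0 n ∅ v₁ := hle n

theorem ReachableIn.of_reachable {x y : V} (h : ReachableIn G v₁ S0 F x) (hF : F ∈ S0)
    (hFG : F ⊆ G.edgeFinset)
    (hxy : (SimpleGraph.fromEdgeSet (F : Set (Sym2 V))).Reachable x y) :
    ReachableIn G v₁ S0 F y := by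
  rw [SimpleGraph.reachable_iff_reflTransGen] at hxy
  induction hxy with
  | refl => exact h
  | @tail a b _ hab ih =>
    have hmem : s(a, b) ∈ F := ((SimpleGraph.fromEdgeSet_adj _).1 hab).1
    have hinsert := Finset.insert_eq_of_mem hmem
    exact hinsert ▸ ih.step (adj_of_mk_mem hFG hmem) (hinsert.symm ▸ hF)

theorem exists_reachableIn_singleton (hS0 : S0 ⊆ scrS G v₁) (hdec : DecreasingIn G v₁ S0)
    (hF : F ∈ S0) : ∃ y, s(v₁, y) ∈ F ∧ {s(v₁, y)} ∈ S0 ∧ ReachableIn G v₁ S0 {s(v₁, y)} y := by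
  obtain ⟨y, hy⟩ := memVerts.exists_mk_mem (hS0 hF).2.1
  have hadj := adj_of_mk_mem (hS0 hF).1 hy
  have hscr : insert s(v₁, y) ∅ ∈ scrS G v₁ :=
    insert_mem_scrS (Finset.empty_subset _) (by simp [memVerts]) hadj
      (memVerts_left (Finset.mem_insert_self _ _))
  have hmem : insert s(v₁, y) ∅ ∈ S0 :=
    hdec _ F hscr (hS0 hF) (Finset.insert_subset hy (Finset.empty_subset _)) hF
  exact ⟨y, hy, hmem, ReachableIn.start.step hadj hmem⟩

theorem exists_reachableIn_insert {F' : Finset (Sym2 V)} {x : V} (hS0 : S0 ⊆ scrS G v₁)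
    (hdec : DecreasingIn G v₁ S0) (hF : F ∈ S0) (hF' : F' ∈ S0) (hsub : F' ⊂ F)
    (hx : memVerts F' x) (h : ReachableIn G v₁ S0 F' x) :
    ∃ a b, s(a, b) ∉ F' ∧ s(a, b) ∈ F ∧ insert s(a, b) F' ∈ S0 ∧
      ReachableIn G v₁ S0 (insert s(a, b) F') b := by
  obtain ⟨hF'G, hv, hconn⟩ := hS0 hF'
  obtain ⟨a, b, ha, habF, habF'⟩ :=
    exists_mk_mem_sdiff_of_not_subset hv (hS0 hF) hsub.2
  have hadj := adj_of_mk_mem (hS0 hF).1 habF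
  obtain ⟨e, he, hve⟩ := hv
  have hscr : insert s(a, b) F' ∈ scrS G v₁ :=
    insert_mem_scrS hF'G (fun y hy => hconn a y ha hy) hadj
      ⟨e, Finset.mem_insert_of_mem he, hve⟩
  have hmem : insert s(a, b) F' ∈ S0 :=
    hdec _ F hscr (hS0 hF) (Finset.insert_subset habF hsub.1) hF
  exact ⟨a, b, habF', habF, hmem, (h.of_reachable hF' hF'G (hconn x a hx ha)).step hadj hmem⟩

theorem exists_reachableIn (hS0 : S0 ⊆ scrS G v₁) (hdec : DecreasingIn G v₁ S0) (hF : F ∈ S0) :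
    ∃ x, memVerts F x ∧ ReachableIn G v₁ S0 F x := by
  let reached : Set (Finset (Sym2 V)) :=
    {F' | F' ⊆ F ∧ F' ∈ S0 ∧ ∃ x, memVerts F' x ∧ ReachableIn G v₁ S0 F' x}
  obtain ⟨y, hyF, hyS, hy⟩ := exists_reachableIn_singleton hS0 hdec hF
  have hne : reached.Nonempty := ⟨{s(v₁, y)}, Finset.singleton_subset_iff.2 hyF, hyS, y,
    memVerts_right (Finset.mem_singleton_self _), hy⟩
  obtain ⟨F', ⟨hsub, hF', x, hx, hreach⟩, hmax⟩ := reached.toFinite.exists_maximal hne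
  rcases hsub.eq_or_ssubset with rfl | hssub
  · exact ⟨x, hx, hreach⟩
  obtain ⟨a, b, habF', habF, hmem, hab⟩ :=
    exists_reachableIn_insert hS0 hdec hF hF' hssub hx hreach
  have hle : insert s(a, b) F' ⊆ F' :=
    hmax ⟨Finset.insert_subset habF hsub, hmem, b,
      memVerts_right (Finset.mem_insert_self _ _), hab⟩ (Finset.subset_insert _ _)
  exact absurd (hle (Finset.mem_insert_self _ _)) habF'

theorem exists_mul_pow_le_survival {l : ℝ} {r : V → ℝ} (hδ : 0 < δ) (hS0 : S0 ⊆ scrS G v₁)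
    (hdec : DecreasingIn G v₁ S0) (hF : F ∈ S0)
    (h : IsPerronPair (killed G δ F) {x | memVerts F x} l r) :
    ∃ c > 0, ∀ n, c * l ^ n ≤ survival G δ S0 n ∅ v₁ := by
  obtain ⟨x, hx, hreach⟩ := exists_reachableIn hS0 hdec hF
  obtain ⟨c, hc, hle⟩ := exists_mul_pow_mul_le_survival hδ hF h
  obtain ⟨d, hd, hdle⟩ := hreach.exists_mul_survival_le hδ
  refine ⟨d * (c * r x), mul_pos hd (mul_pos hc (h.pos hx)), fun n => ?_⟩
  calc d * (c * r x) * l ^ n = d * (c * l ^ n * r x) := by ring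
    _ ≤ d * survival G δ S0 n F x := mul_le_mul_of_nonneg_left (hle n x) hd.le
    _ ≤ survival G δ S0 n ∅ v₁ := hdle n

end Reachability

section ExponentialMoment

/-- `E[exp (α T)]` for a random time `T` with values in `{1, 2, …} ∪ {∞}` and tail probabilities
`P n = ℙ(T > n)`. -/
def tailExpMoment (P : ℕ → ℝ) (α : ℝ) : ℝ≥0∞ :=
  (∑' n : ℕ, ENNReal.ofReal (Real.exp (α * (n + 1)) * (P n - P (n + 1)))) +
    (if 0 < α then (⊤ : ℝ≥0∞) else if α = 0 then 1 else 0) * ENNReal.ofReal (⨅ n : ℕ, P n)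

variable {P : ℕ → ℝ} {α : ℝ}

theorem ciInf_nonpos_of_le_geometric {C L : ℝ} (hP : ∀ n, 0 ≤ P n) (hL : 0 ≤ L) (hL1 : L < 1)
    (hPL : ∀ n, P n ≤ C * L ^ n) : ⨅ n, P n ≤ 0 := by
  have hlim : Tendsto (fun n : ℕ => C * L ^ n) atTop (𝓝 0) := by
    simpa using (tendsto_pow_atTop_nhds_zero_of_lt_one hL hL1).const_mul C
  exact ge_of_tendsto' hlim fun n => (ciInf_le ⟨0, Set.forall_mem_range.2 hP⟩ n).trans (hPL n)

theorem tailExpMoment_lt_top {C L : ℝ} (hP : ∀ n, 0 ≤ P n) (hL : 0 ≤ L) (hLα : L < Real.exp (-α))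
    (hPL : ∀ n, P n ≤ C * L ^ n) : tailExpMoment P α < ⊤ := by
  have hθ : Real.exp α * L < 1 := by
    rwa [← lt_inv_mul_iff₀ (Real.exp_pos α), mul_one, ← Real.exp_neg]
  refine ENNReal.add_lt_top.2 ⟨?_, ?_⟩
  · have hsum : Summable fun n : ℕ => Real.exp α * C * (Real.exp α * L) ^ n :=
      (summable_geometric_of_lt_one (by positivity) hθ).mul_left _
    refine (ENNReal.tsum_le_tsum fun n => ENNReal.ofReal_le_ofReal ?_).trans_lt
      hsum.tsum_ofReal_lt_top
    have hexp : Real.exp (α * (n + 1)) = Real.exp α * Real.exp α ^ n := by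
      rw [← Real.exp_nat_mul, ← Real.exp_add]
      ring_nf
    calc Real.exp (α * (n + 1)) * (P n - P (n + 1))
        ≤ Real.exp (α * (n + 1)) * (C * L ^ n) :=
          mul_le_mul_of_nonneg_left (by linarith [hP (n + 1), hPL n]) (Real.exp_pos _).le
      _ = Real.exp α * C * (Real.exp α * L) ^ n := by rw [hexp]; ring
  · split_ifs with hα
    · have hL1 : L < 1 := hLα.trans (Real.exp_lt_one_iff.2 (neg_neg_of_pos hα))
      rw [ENNReal.ofReal_of_nonpos (ciInf_nonpos_of_le_geometric hP hL hL1 hPL), mul_zero]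
      exact ENNReal.zero_lt_top
    all_goals simp

theorem tsum_ofReal_sub_succ (hanti : Antitone P) (hlim : Tendsto P atTop (𝓝 0)) :
    ∑' n, ENNReal.ofReal (P n - P (n + 1)) = ENNReal.ofReal (P 0) := by
  have hnonneg : ∀ n, 0 ≤ P n - P (n + 1) := fun n => sub_nonneg.2 (hanti n.le_succ)
  have hsum : HasSum (fun n => P n - P (n + 1)) (P 0) := by
    rw [hasSum_iff_tendsto_nat_of_nonneg hnonneg]
    simpa only [Finset.sum_range_sub', sub_zero] using hlim.const_sub (P 0)
  rw [← ENNReal.ofReal_tsum_of_nonneg hnonneg hsum.summable, hsum.tsum_eq]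

theorem ofReal_exp_mul_le_tsum (hanti : Antitone P) (hlim : Tendsto P atTop (𝓝 0)) (hα : 0 ≤ α)
    (N : ℕ) : ENNReal.ofReal (Real.exp (α * N) * P N) ≤ ∑' n : ℕ,
      ENNReal.ofReal (Real.exp (α * ((n + N : ℕ) + 1)) * (P (n + N) - P (n + N + 1))) := by
  have htail := tsum_ofReal_sub_succ (P := fun n => P (n + N))
    (fun _ _ h => hanti (Nat.add_le_add_right h N)) (hlim.comp (tendsto_add_atTop_nat N))
  rw [zero_add] at htail
  rw [ENNReal.ofReal_mul (Real.exp_pos _).le, ← htail, ← ENNReal.tsum_mul_left]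
  refine ENNReal.tsum_le_tsum fun n => ?_
  rw [← ENNReal.ofReal_mul (Real.exp_pos _).le, Nat.add_right_comm n 1 N]
  refine ENNReal.ofReal_le_ofReal (mul_le_mul_of_nonneg_right ?_
    (sub_nonneg.2 (hanti (Nat.le_succ _))))
  refine Real.exp_le_exp.2 (mul_le_mul_of_nonneg_left ?_ hα)
  push_cast
  linarith [n.cast_nonneg (α := ℝ)]

/-- At the critical exponent the terms of the series need not be bounded below, but its tails
are. -/
theorem tailExpMoment_eq_top {c : ℝ} (hanti : Antitone P) (hP : ∀ n, 0 ≤ P n) (hα : 0 < α)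
    (hc : 0 < c) (hcP : ∀ n : ℕ, c ≤ Real.exp (α * n) * P n) : tailExpMoment P α = ⊤ := by
  have hlim := tendsto_atTop_ciInf hanti ⟨0, Set.forall_mem_range.2 hP⟩
  rw [tailExpMoment, if_pos hα]
  rcases (le_ciInf hP).eq_or_lt with hinf | hinf
  · rw [← hinf] at hlim
    refine ENNReal.add_eq_top.2 (Or.inl (by_contra fun hfinite => ?_))
    have htail := ENNReal.tendsto_sum_nat_add _ hfinite
    refine (ENNReal.ofReal_pos.2 hc).not_ge (ge_of_tendsto' htail fun N => ?_)
    exact (ENNReal.ofReal_le_ofReal (hcP N)).trans (ofReal_exp_mul_le_tsum hanti hlim hα.le N)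
  · rw [ENNReal.top_mul (ENNReal.ofReal_pos.2 hinf).ne', add_top]

end ExponentialMoment

theorem orrw_exp_integrability_general {V : Type} [Fintype V] [DecidableEq V] (G : SimpleGraph V)
    [DecidableRel G.Adj] (v₁ : V) (δ : ℝ) (hδ : 0 < δ) (S0 : Set (Finset (Sym2 V)))
    (hS0sub : S0 ⊆ scrS G v₁) (hS0dec : DecreasingIn G v₁ S0) (hS0ne' : S0 ≠ scrS G v₁) :
    ∀ α : ℝ, ((α : EReal) < alphaC G δ S0 → expT G δ v₁ S0 α < ⊤) ∧
      (alphaC G δ S0 ≤ (α : EReal) → expT G δ v₁ S0 α = ⊤) := by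
  intro α
  have hexpT : expT G δ v₁ S0 α = tailExpMoment (fun n => survival G δ S0 n ∅ v₁) α := by
    simp only [expT, tailExpMoment, probTgt_eq_survival]
  rw [hexpT, ← not_le, alphaC_le_coe_iff hδ hS0sub]
  constructor
  · intro hα
    obtain ⟨L, hL, hLα, hlL⟩ := exists_lt_exp_forall_eigenvalue_lt hδ hS0sub hα
    obtain ⟨C, hC⟩ := exists_survival_le hδ hL hlL ∅ v₁
    exact tailExpMoment_lt_top (fun n => survival_nonneg hδ n ∅ v₁) hL.le hLα hC
  · rintro ⟨F, hF, l, r, hlr, hαl⟩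
    obtain ⟨c, hc, hle⟩ := exists_mul_pow_le_survival hδ hS0sub hS0dec hF hlr
    have hα : 0 < α := by
      have hl := eigenvalue_lt_one_of_ne_scrS hδ hS0sub hS0dec hS0ne' hF hlr
      simpa using hαl.trans_lt hl
    refine tailExpMoment_eq_top (survival_antitone hδ ∅ v₁)
      (fun n => survival_nonneg hδ n ∅ v₁) hα hc fun n => ?_
    calc c = Real.exp (α * n) * (c * Real.exp (-α) ^ n) := by
          rw [← Real.exp_nat_mul, mul_left_comm, ← Real.exp_add]
          simp [mul_comm]
      _ ≤ Real.exp (α * n) * survival G δ S0 n ∅ v₁ := by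
          gcongr
          exact le_trans (by gcongr) (hle n)

/-- `α_c(δ)` is the critical exponent for exponential integrability of
the stopping time `T_{𝒮₀}`. -/
theorem orrw_exp_integrability {V : Type} [Fintype V] [DecidableEq V]
    (G : SimpleGraph V) [DecidableRel G.Adj] (hG : G.Connected)
    (hV : 3 ≤ Fintype.card V) (v₁ : V) (δ : ℝ) (hδ : 0 < δ)
    (S0 : Set (Finset (Sym2 V))) (hS0ne : S0.Nonempty) (hS0sub : S0 ⊆ scrS G v₁)
    (hS0dec : DecreasingIn G v₁ S0) (hS0ne' : S0 ≠ scrS G v₁) :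
    ∀ α : ℝ, (((α : ℝ) : EReal) < alphaC G δ S0 → expT G δ v₁ S0 α < ⊤) ∧
      (alphaC G δ S0 ≤ ((α : ℝ) : EReal) → expT G δ v₁ S0 α = ⊤) :=
  orrw_exp_integrability_general G v₁ δ hδ S0 hS0sub hS0dec hS0ne'

end ORRW
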